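/- arXiv:1706.03726 — 4 statements merged into one kernel-verified Lean document; each statement's English description precedes it below -/
import Mathlib

section
/- Let k be a number field, let m be a positive integer not divisible by 8, and let x ∈ k. If for all but finitely many finite places v of k the image of x in the completion k_v is an m-th power in k_v, then x is an m-th power in k. (This is the non-exceptional case of the Grunwald–Wang theorem: the exceptional case can only occur when m = 2^t·m' with m' odd and t > s_k ≥ 2, hence requires 8 ∣ m.) -/
open IsDedekindDomain
open scoped NumberField

section

open Filter Topology nonZeroDivisors UniqueFactorizationMonoid NumberField
open scoped Pointwise

/-- Reciprocals of a size function of positive linear density are not summable. -/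
theorem not_summable_inv_of_tendsto_card_div {α : Type*} (N : α → ℕ) (hN : ∀ a, 0 < N a)
    (hfin : ∀ s : ℝ, {a | (N a : ℝ) ≤ s}.Finite) {c : ℝ} (hc : 0 < c)
    (h : Tendsto (fun s : ℝ ↦ (Nat.card {a // (N a : ℝ) ≤ s} : ℝ) / s) atTop (𝓝 c)) :
    ¬ Summable (fun a ↦ (N a : ℝ)⁻¹) := by
  classical
  intro hs
  obtain ⟨T, hT⟩ := summable_iff_vanishing.mp hs (Metric.ball 0 (c / 2))
    (Metric.ball_mem_nhds 0 (by positivity))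
  have hlim : Tendsto (fun s : ℝ ↦ (T.card : ℝ) / s + c / 2) atTop (𝓝 (0 + c / 2)) :=
    (tendsto_const_nhds.div_atTop tendsto_id).add tendsto_const_nhds
  have hle : c ≤ 0 + c / 2 := by
    refine le_of_tendsto_of_tendsto h hlim ?_
    filter_upwards [eventually_gt_atTop 0] with s hs0
    have hcard : Nat.card {a // (N a : ℝ) ≤ s} = (hfin s).toFinset.card :=
      Nat.card_eq_card_finite_toFinset (hfin s)
    have h1 : (hfin s).toFinset.card ≤ T.card + ((hfin s).toFinset \ T).card := by
      have := Finset.card_le_card_sdiff_add_card (s := (hfin s).toFinset) (t := T)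
      omega
    have h2 : (((hfin s).toFinset \ T).card : ℝ) ≤ s * (c / 2) := by
      have hb := hT ((hfin s).toFinset \ T) Finset.sdiff_disjoint
      rw [mem_ball_zero_iff, Real.norm_eq_abs] at hb
      have h3 : (((hfin s).toFinset \ T).card : ℝ) ≤
          s * ∑ a ∈ (hfin s).toFinset \ T, (N a : ℝ)⁻¹ := by
        rw [Finset.mul_sum, Finset.cast_card]
        refine Finset.sum_le_sum fun a ha ↦ ?_
        have ha' : (N a : ℝ) ≤ s := by simpa using (Finset.mem_sdiff.mp ha).1
        have : (0 : ℝ) < N a := by exact_mod_cast hN a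
        rw [← div_eq_mul_inv]
        exact (one_le_div this).mpr ha'
      exact h3.trans (mul_le_mul_of_nonneg_left ((le_abs_self _).trans hb.le) hs0.le)
    rw [hcard, div_add' _ _ _ hs0.ne']
    gcongr
    have h1' : ((hfin s).toFinset.card : ℝ) ≤ T.card + ((hfin s).toFinset \ T).card := by
      exact_mod_cast h1
    linarith
  linarith

/-- Pairs of objects of positive linear density are too numerous to embed multiplicatively
in a family of linear density. -/
theorem not_injective_of_tendsto_card_div {α β : Type*} (N : α → ℕ) (M : β → ℕ)
    (hN : ∀ a, 0 < N a) (hfin : ∀ s : ℝ, {a | (N a : ℝ) ≤ s}.Finite)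
    (hfin' : ∀ s : ℝ, {b | (M b : ℝ) ≤ s}.Finite) {c d : ℝ} (hc : 0 < c)
    (h : Tendsto (fun s : ℝ ↦ (Nat.card {a // (N a : ℝ) ≤ s} : ℝ) / s) atTop (𝓝 c))
    (h' : Tendsto (fun s : ℝ ↦ (Nat.card {b // (M b : ℝ) ≤ s} : ℝ) / s) atTop (𝓝 d))
    (f : α × α → β) (hf : ∀ a b, M (f (a, b)) = N a * N b) : ¬ Function.Injective f := by
  classical
  intro hinj
  refine not_summable_inv_of_tendsto_card_div N hN hfin hc h
    (summable_of_sum_le (c := d / c) (fun a ↦ by positivity) fun T ↦ ?_)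
  rw [le_div_iff₀ hc, Finset.sum_mul]
  have hlim : Tendsto (fun s : ℝ ↦ ∑ a ∈ T,
      (N a : ℝ)⁻¹ * ((Nat.card {b // (N b : ℝ) ≤ s / N a} : ℝ) / (s / N a))) atTop
      (𝓝 (∑ a ∈ T, (N a : ℝ)⁻¹ * c)) := by
    refine tendsto_finsetSum T fun a _ ↦ Tendsto.const_mul _ (h.comp ?_)
    exact tendsto_id.atTop_div_const (by exact_mod_cast hN a)
  refine le_of_tendsto_of_tendsto hlim h' ?_
  filter_upwards [eventually_gt_atTop 0] with s hs0
  have hcard : (∑ a ∈ T, Nat.card {b // (N b : ℝ) ≤ s / N a}) ≤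
      Nat.card {b // (M b : ℝ) ≤ s} := by
    have hα (t : ℝ) : Nat.card {a // (N a : ℝ) ≤ t} = (hfin t).toFinset.card :=
      Nat.card_eq_card_finite_toFinset (hfin t)
    have hβ : Nat.card {b // (M b : ℝ) ≤ s} = (hfin' s).toFinset.card :=
      Nat.card_eq_card_finite_toFinset (hfin' s)
    simp_rw [hα, hβ]
    rw [← Finset.card_sigma]
    refine Finset.card_le_card_of_injOn (fun p ↦ f (p.1, p.2)) ?_ ?_
    · rintro ⟨a, b⟩ hab
      have hb : (N b : ℝ) ≤ s / N a := by simpa using (Finset.mem_sigma.mp hab).2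
      rw [le_div_iff₀ (by exact_mod_cast hN a)] at hb
      simp only [Set.Finite.coe_toFinset, Set.mem_ofPred_eq, hf]
      push_cast
      linarith
    · rintro ⟨a, b⟩ _ ⟨a', b'⟩ _ hab
      have := hinj hab
      simp only [Prod.mk.injEq] at this
      rw [this.1, this.2]
  have : (∑ a ∈ T, (N a : ℝ)⁻¹ * ((Nat.card {b // (N b : ℝ) ≤ s / N a} : ℝ) / (s / N a))) =
      (∑ a ∈ T, Nat.card {b // (N b : ℝ) ≤ s / N a} : ℕ) / s := by
    push_cast
    rw [Finset.sum_div]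
    refine Finset.sum_congr rfl fun a _ ↦ ?_
    have : (N a : ℝ) ≠ 0 := by exact_mod_cast (hN a).ne'
    field_simp
  rw [this]
  gcongr

theorem finite_setOf_absNorm_le (F : Type*) [Field F] [NumberField F] (s : ℝ) :
    {I : (Ideal (𝓞 F))⁰ | (Ideal.absNorm (I : Ideal (𝓞 F)) : ℝ) ≤ s}.Finite := by
  have h := Ideal.finite_setOfPred_absNorm_le (S := 𝓞 F) ⌊s⌋₊
  refine Set.Finite.of_finite_image (f := Subtype.val) (h.subset ?_) Subtype.val_injective.injOn
  rintro _ ⟨I, hI, rfl⟩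
  exact Nat.le_floor hI

/-- The nonzero ideals prime to a given finite set of primes have positive density. -/
theorem exists_tendsto_card_absNorm_le_div (F : Type*) [Field F] [NumberField F]
    (S : Finset (HeightOneSpectrum (𝓞 F))) :
    ∃ c : ℝ, 0 < c ∧ Tendsto (fun s : ℝ ↦ (Nat.card {I : (Ideal (𝓞 F))⁰ //
      (Ideal.absNorm (I : Ideal (𝓞 F)) : ℝ) ≤ s ∧ ∀ P ∈ S, ¬ P.asIdeal ∣ I} : ℝ) / s)
      atTop (𝓝 c) := by
  classical
  induction S using Finset.induction_on with
  | empty =>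
    refine ⟨_, dedekindZeta_residue_pos F, ?_⟩
    simpa [dedekindZeta_residue_def] using Ideal.tendsto_norm_le_div_atTop₀ F
  | insert P S hP ih =>
    obtain ⟨c, hc, h⟩ := ih
    set n : ℝ := (Ideal.absNorm P.asIdeal : ℝ) with hn
    have hn1 : 1 < n := by
      have h0 : Ideal.absNorm P.asIdeal ≠ 0 :=
        Ideal.absNorm_eq_zero_iff.not.mpr P.ne_bot
      have h1 : Ideal.absNorm P.asIdeal ≠ 1 := by
        simpa using P.isPrime.ne_top
      rw [hn]
      exact_mod_cast (show 1 < Ideal.absNorm P.asIdeal by omega)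
    refine ⟨c - n⁻¹ * c, ?_, ?_⟩
    · have : n⁻¹ < 1 := inv_lt_one_of_one_lt₀ hn1
      nlinarith
    · have h2 := h.comp (tendsto_id.atTop_div_const (r := n) (by linarith))
      refine (h.sub (h2.const_mul n⁻¹)).congr' ?_
      filter_upwards [eventually_gt_atTop 0] with s hs0
      have hPmem : P.asIdeal ∈ (Ideal (𝓞 F))⁰ := mem_nonZeroDivisors_of_ne_zero P.ne_bot
      have key : Nat.card {I : (Ideal (𝓞 F))⁰ //
            (Ideal.absNorm (I : Ideal (𝓞 F)) : ℝ) ≤ s ∧ ∀ Q ∈ S, ¬ Q.asIdeal ∣ I} =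
          Nat.card {I : (Ideal (𝓞 F))⁰ //
            (Ideal.absNorm (I : Ideal (𝓞 F)) : ℝ) ≤ s ∧ ∀ Q ∈ insert P S, ¬ Q.asIdeal ∣ I} +
          Nat.card {I : (Ideal (𝓞 F))⁰ //
            (Ideal.absNorm (I : Ideal (𝓞 F)) : ℝ) ≤ s / n ∧ ∀ Q ∈ S, ¬ Q.asIdeal ∣ I} := by
        have hfin (t : ℝ) (p : (Ideal (𝓞 F))⁰ → Prop) :
            {I : (Ideal (𝓞 F))⁰ | (Ideal.absNorm (I : Ideal (𝓞 F)) : ℝ) ≤ t ∧ p I}.Finite :=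
          (finite_setOf_absNorm_le F t).subset fun I hI ↦ hI.1
        have hinj : Function.Injective
            (fun I : (Ideal (𝓞 F))⁰ ↦ (⟨P.asIdeal, hPmem⟩ : (Ideal (𝓞 F))⁰) * I) :=
          mul_right_injective _
        have hcard (p : (Ideal (𝓞 F))⁰ → Prop) : Nat.card {I // p I} = {I | p I}.ncard :=
          Nat.card_coe_set_eq {I | p I}
        simp only [hcard]
        rw [← Set.ncard_image_of_injective {I : (Ideal (𝓞 F))⁰ |
            (Ideal.absNorm (I : Ideal (𝓞 F)) : ℝ) ≤ s / n ∧ ∀ Q ∈ S, ¬ Q.asIdeal ∣ I} hinj,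
          ← Set.ncard_union_eq ?_ (hfin _ _) ((hfin _ _).image _)]
        · congr 1
          ext I
          have hmul (J : (Ideal (𝓞 F))⁰) : ((Ideal.absNorm (P.asIdeal * (J : Ideal (𝓞 F))) : ℕ) : ℝ) ≤ s ↔
              (Ideal.absNorm (J : Ideal (𝓞 F)) : ℝ) ≤ s / n := by
            rw [le_div_iff₀ (by linarith), map_mul, Nat.cast_mul, mul_comm]
          constructor
          · rintro ⟨hI, hIS⟩
            by_cases hPI : P.asIdeal ∣ I
            · right
              obtain ⟨J, hJ⟩ := hPI
              have hJ0 : J ≠ 0 := by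
                rintro rfl
                exact nonZeroDivisors.coe_ne_zero I (by simpa using hJ)
              refine ⟨⟨J, mem_nonZeroDivisors_of_ne_zero hJ0⟩, ⟨?_, fun Q hQ hQJ ↦ ?_⟩,
                Subtype.ext hJ.symm⟩
              · rw [← hmul]
                exact hJ ▸ hI
              · exact hIS Q hQ (hJ ▸ hQJ.mul_left _)
            · left
              refine ⟨hI, fun Q hQ ↦ ?_⟩
              rcases Finset.mem_insert.mp hQ with rfl | hQ
              exacts [hPI, hIS Q hQ]
          · rintro (⟨hI, hIS⟩ | ⟨J, ⟨hJ, hJS⟩, rfl⟩)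
            · exact ⟨hI, fun Q hQ ↦ hIS Q (Finset.mem_insert_of_mem hQ)⟩
            · refine ⟨(hmul J).mpr hJ, fun Q hQ hdvd ↦ ?_⟩
              rcases Q.prime.dvd_or_dvd hdvd with h | h
              · refine hP ?_
                have : Q = P := HeightOneSpectrum.ext
                  ((P.isMaximal.eq_of_le Q.isPrime.ne_top (Ideal.dvd_iff_le.mp h)).symm)
                exact this ▸ hQ
              · exact hJS Q hQ h
        · rw [Set.disjoint_left]
          rintro _ ⟨_, hI⟩ ⟨J, _, rfl⟩
          exact hI P (Finset.mem_insert_self P S) (dvd_mul_right _ _)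
      rw [key]
      push_cast
      simp only [Function.comp_apply, id]
      have hn0 : n ≠ 0 := by linarith
      rw [div_div_eq_mul_div, inv_mul_eq_div, div_div, mul_div_mul_right _ _ hn0]
      ring

/-- An algebraic integer that is an `m`-th power in `k_v` is an `m`-th power modulo `v`. -/
theorem exists_pow_sub_mem_of_exists_pow_eq {R : Type*} [CommRing R] [IsDedekindDomain R]
    (K : Type*) [Field K] [Algebra R K] [IsFractionRing R K] (v : HeightOneSpectrum R) {m : ℕ}
    (hm : m ≠ 0) (x : R) (y : v.adicCompletion K)
    (hy : y ^ m = algebraMap K (v.adicCompletion K) (algebraMap R K x)) :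
    ∃ a : R, a ^ m - x ∈ v.asIdeal := by
  have hval (z : K) : Valued.v (algebraMap K (v.adicCompletion K) z) = v.valuation K z :=
    HeightOneSpectrum.valuedAdicCompletion_eq_valuation' v z
  have hy1 : Valued.v y ≤ 1 := by
    have : Valued.v y ^ m ≤ 1 := by
      rw [← map_pow, hy, hval]
      exact v.valuation_le_one x
    exact (pow_le_one_iff hm).mp this
  obtain ⟨b, hb⟩ : ∃ b : K, Valued.v (algebraMap K (v.adicCompletion K) b - y) < 1 := by
    have hopen : IsOpen {z : v.adicCompletion K | Valued.v (z - y) < 1} := by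
      have h := (Valued.isOpen_ball (v.adicCompletion K) 1).preimage (continuous_sub_right y)
      convert h using 1
      ext z
      simp
    exact (HeightOneSpectrum.denseRange_algebraMap K v).exists_mem_open hopen ⟨y, by simp⟩
  have hb1 : v.valuation K b ≤ 1 := by
    rw [← hval, ← sub_add_cancel (algebraMap K (v.adicCompletion K) b) y]
    exact Valuation.map_add_le _ hb.le hy1
  obtain ⟨a, ha⟩ := v.exists_valuation_sub_lt_of_integer hb1 1
  refine ⟨a, (v.valuation_lt_one_iff_mem (K := K) _).mp ?_⟩
  change v.valuation K (algebraMap R K (a ^ m - x)) < 1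
  rw [← hval, map_sub, map_sub, ← hy, map_pow, map_pow]
  set a' := algebraMap K (v.adicCompletion K) (algebraMap R K a) with ha'
  have hay : Valued.v (a' - y) < 1 := by
    rw [← sub_add_sub_cancel a' (algebraMap K (v.adicCompletion K) b) y]
    refine Valuation.map_add_lt _ ?_ hb
    rw [ha', ← map_sub, hval]
    exact ha
  have ha1 : Valued.v a' ≤ 1 := by
    rw [ha', hval]
    exact v.valuation_le_one a
  rw [← (Commute.all a' y).mul_geom_sum₂, map_mul]
  refine mul_lt_one_of_lt_of_le hay (Valuation.map_sum_le _ fun i _ ↦ ?_)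
  rw [map_mul, map_pow, map_pow]
  exact mul_le_one' (pow_le_one' ha1 _) (pow_le_one' hy1 _)

theorem Multiset.filterMap_none {α β : Type*} (s : Multiset α) :
    s.filterMap (fun _ ↦ (none : Option β)) = 0 := by
  induction s using Multiset.induction_on with
  | empty => rfl
  | cons a s ih => rw [Multiset.filterMap_cons_none _ _ rfl, ih]

theorem Multiset.map_inl_add_map_inr_inj {α β : Type*} {s s' : Multiset α} {t t' : Multiset β} :
    s.map Sum.inl + t.map Sum.inr = s'.map Sum.inl + t'.map Sum.inr ↔ s = s' ∧ t = t' := by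
  refine ⟨fun h ↦ ?_, fun h ↦ by rw [h.1, h.2]⟩
  have hl := congrArg (Multiset.filterMap (Sum.elim some fun _ ↦ none)) h
  have hr := congrArg (Multiset.filterMap (Sum.elim (fun _ ↦ none) some)) h
  simp only [Multiset.filterMap_add, Multiset.filterMap_map, Sum.elim_comp_inl, Sum.elim_comp_inr,
    Multiset.filterMap_some, filterMap_none, add_zero, zero_add] at hl hr
  exact ⟨hl, hr⟩

/-- In an extension of number fields, infinitely many primes do not have two distinct primes of
relative degree one above them. -/
theorem infinite_setOf_not_exists_two_primes_over (F L : Type*) [Field F] [NumberField F]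
    [Field L] [NumberField L] [Algebra F L] :
    {P : HeightOneSpectrum (𝓞 F) | ¬ ∃ Q₁ Q₂ : HeightOneSpectrum (𝓞 L), Q₁ ≠ Q₂ ∧
      (Q₁.asIdeal.under (𝓞 F) = P.asIdeal ∧ Q₁.asIdeal.absNorm = P.asIdeal.absNorm) ∧
      (Q₂.asIdeal.under (𝓞 F) = P.asIdeal ∧
        Q₂.asIdeal.absNorm = P.asIdeal.absNorm)}.Infinite := by
  classical
  intro hS
  let G := {P : HeightOneSpectrum (𝓞 F) // P ∉ hS.toFinset}
  have hG : ∀ P : G, ∃ Q₁ Q₂ : HeightOneSpectrum (𝓞 L), Q₁ ≠ Q₂ ∧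
      (Q₁.asIdeal.under (𝓞 F) = P.1.asIdeal ∧ Q₁.asIdeal.absNorm = P.1.asIdeal.absNorm) ∧
      (Q₂.asIdeal.under (𝓞 F) = P.1.asIdeal ∧
        Q₂.asIdeal.absNorm = P.1.asIdeal.absNorm) := by
    rintro ⟨P, hP⟩
    simpa only [Set.Finite.mem_toFinset, Set.mem_ofPred_eq, not_not] using hP
  choose Q₁ Q₂ hne h₁ h₂ using hG
  let Q : G ⊕ G → Ideal (𝓞 L) := Sum.elim (fun P ↦ (Q₁ P).asIdeal) (fun P ↦ (Q₂ P).asIdeal)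
  let u : G ⊕ G → G := Sum.elim id id
  have hQu (z : G ⊕ G) : (Q z).under (𝓞 F) = (u z).1.asIdeal := by
    rcases z with P | P
    exacts [(h₁ P).1, (h₂ P).1]
  have hQN (z : G ⊕ G) : (Q z).absNorm = (u z).1.asIdeal.absNorm := by
    rcases z with P | P
    exacts [(h₁ P).2, (h₂ P).2]
  have hQprime (z : G ⊕ G) : Prime (Q z) := by
    rcases z with P | P
    exacts [(Q₁ P).prime, (Q₂ P).prime]
  have hQinj : Function.Injective Q := by
    intro z z' hzz
    have hu : u z = u z' := by
      refine Subtype.ext (HeightOneSpectrum.ext ?_)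
      rw [← hQu, ← hQu, hzz]
    rcases z with P | P <;> rcases z' with P' | P' <;> obtain rfl : P = P' := hu
    · rfl
    · exact absurd (HeightOneSpectrum.ext hzz) (hne P)
    · exact absurd (HeightOneSpectrum.ext hzz.symm) (hne P)
    · rfl
  let A := {I : (Ideal (𝓞 F))⁰ // ∀ P ∈ hS.toFinset, ¬ P.asIdeal ∣ I}
  have hA (I : A) : ∃ t : Multiset G,
      (t.map fun P ↦ P.1.asIdeal) = normalizedFactors (I.1 : Ideal (𝓞 F)) := by
    have hI0 : (I.1 : Ideal (𝓞 F)) ≠ 0 := nonZeroDivisors.coe_ne_zero I.1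
    have hmem (J) (hJ : J ∈ normalizedFactors (I.1 : Ideal (𝓞 F))) :
        ∃ P : G, P.1.asIdeal = J := by
      have hJp := prime_of_normalized_factor J hJ
      refine ⟨⟨⟨J, Ideal.isPrime_of_prime hJp, hJp.ne_zero⟩, fun hJS ↦ ?_⟩, rfl⟩
      exact I.2 _ hJS (dvd_of_mem_normalizedFactors hJ)
    have : CanLift (Ideal (𝓞 F)) G (fun P ↦ P.1.asIdeal) (fun J ↦ ∃ P : G, P.1.asIdeal = J) :=
      ⟨fun _ hJ ↦ hJ⟩
    exact (Multiset.canLift (fun P : G ↦ P.1.asIdeal) _).prf _ hmem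
  choose g hg using hA
  have hginj : Function.Injective g := by
    intro I J hIJ
    have : normalizedFactors (I.1 : Ideal (𝓞 F)) = normalizedFactors (J.1 : Ideal (𝓞 F)) := by
      rw [← hg, ← hg, hIJ]
    refine Subtype.ext (Subtype.ext ?_)
    rw [← associated_iff_eq]
    exact (associated_iff_normalizedFactors_eq_normalizedFactors
      (nonZeroDivisors.coe_ne_zero _) (nonZeroDivisors.coe_ne_zero _)).mpr this
  have hgN (I : A) : ((g I).map fun P ↦ P.1.asIdeal.absNorm).prod =
      Ideal.absNorm (I.1 : Ideal (𝓞 F)) := by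
    conv_rhs => rw [← associated_iff_eq.mp (prod_normalizedFactors (nonZeroDivisors.coe_ne_zero I.1)),
      ← hg, map_multiset_prod, Multiset.map_map]
    rfl
  let w : A × A → Multiset (G ⊕ G) := fun p ↦ (g p.1).map Sum.inl + (g p.2).map Sum.inr
  have hwinj : Function.Injective w := by
    rintro ⟨I, J⟩ ⟨I', J'⟩ h
    have h' := Multiset.map_inl_add_map_inr_inj.mp h
    exact Prod.ext (hginj h'.1) (hginj h'.2)
  have hprime (t : Multiset (G ⊕ G)) : ∀ p ∈ t.map Q, Prime p := by
    intro p hp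
    obtain ⟨z, -, rfl⟩ := Multiset.mem_map.mp hp
    exact hQprime z
  let f : A × A → (Ideal (𝓞 L))⁰ := fun p ↦ ⟨((w p).map Q).prod,
    mem_nonZeroDivisors_of_ne_zero (Multiset.prod_ne_zero fun h0 ↦
      (hprime _ 0 h0).ne_zero rfl)⟩
  have hfinj : Function.Injective f := by
    intro p q hpq
    have := congrArg (fun J : (Ideal (𝓞 L))⁰ ↦ normalizedFactors (J : Ideal (𝓞 L))) hpq
    simp only [f, normalizedFactors_prod_of_prime (hprime _)] at this
    exact hwinj (Multiset.map_injective hQinj this)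
  have hwN (I J : A) : Ideal.absNorm ((w (I, J)).map Q).prod =
      Ideal.absNorm (I.1 : Ideal (𝓞 F)) * Ideal.absNorm (J.1 : Ideal (𝓞 F)) := by
    rw [map_multiset_prod, Multiset.map_map]
    simp only [w, ← hgN, Multiset.map_map, Multiset.map_add, Multiset.prod_add,
      Function.comp_def, hQN]
    rfl
  obtain ⟨c, hc, hlim⟩ := exists_tendsto_card_absNorm_le_div F hS.toFinset
  refine not_injective_of_tendsto_card_div (fun I : A ↦ Ideal.absNorm (I.1 : Ideal (𝓞 F)))
    (fun J : (Ideal (𝓞 L))⁰ ↦ Ideal.absNorm (J : Ideal (𝓞 L))) (fun I ↦ ?_) (fun s ↦ ?_)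
    (finite_setOf_absNorm_le L) hc ?_ (Ideal.tendsto_norm_le_div_atTop₀ L) f (fun I J ↦ ?_) hfinj
  · exact Ideal.absNorm_pos_of_nonZeroDivisors I.1
  · exact (finite_setOf_absNorm_le F s).preimage Subtype.val_injective.injOn
  · refine hlim.congr fun s ↦ ?_
    congr 2
    exact Nat.card_congr ((Equiv.subtypeEquivRight fun I ↦ and_comm).trans
      (Equiv.subtypeSubtypeEquivSubtypeInter _ _).symm)
  · exact hwN I J

theorem eq_of_pow_eq_pow_of_sub_mem {B : Type*} [CommRing B] [IsDomain B] (Q : Ideal B)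
    [Q.IsPrime] {m : ℕ} (hm : (m : B) ∉ Q) {b c : B} (hb : b ∉ Q) (hbc : c ^ m = b ^ m)
    (h : c - b ∈ Q) : c = b := by
  by_contra hne
  have h0 : (c - b) * ∑ i ∈ Finset.range m, c ^ i * b ^ (m - 1 - i) = 0 := by
    rw [(Commute.all c b).mul_geom_sum₂, hbc, sub_self]
  have hsum := (mul_eq_zero.mp h0).resolve_left (sub_ne_zero.mpr hne)
  have hcb : Ideal.Quotient.mk Q c = Ideal.Quotient.mk Q b := Ideal.Quotient.eq.mpr h
  have hmem : (m : B) * b ^ (m - 1) ∈ Q := by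
    rw [← Ideal.Quotient.eq_zero_iff_mem, ← map_zero (Ideal.Quotient.mk Q), ← hsum]
    simp only [map_sum, map_mul, map_pow, hcb, map_natCast]
    rw [Finset.sum_congr rfl (g := fun _ ↦ Ideal.Quotient.mk Q b ^ (m - 1))]
    · simp
    · intro i hi
      have := Finset.mem_range.mp hi
      rw [← pow_add]
      congr 1
      omega
  exact (Ideal.IsPrime.mem_or_mem ‹_› hmem).elim hm fun h ↦ hb (Ideal.IsPrime.mem_of_pow_mem ‹_› _ h)

theorem absNorm_eq_of_stabilizer_eq_bot {F L : Type*} [Field F] [NumberField F] [Field L]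
    [NumberField L] [Algebra F L] [IsGalois F L] (P : Ideal (𝓞 F)) (hP0 : P ≠ ⊥) [P.IsPrime]
    (Q : Ideal (𝓞 L)) [Q.IsPrime] [Q.LiesOver P]
    (h : ∀ τ : Gal(L/F), τ • Q = Q → τ = 1) : Q.absNorm = P.absNorm := by
  have : P.IsMaximal := Ideal.IsPrime.isMaximal ‹_› hP0
  have hstab : MulAction.stabilizer Gal(L/F) Q = ⊥ := by
    rw [eq_bot_iff]
    exact fun τ hτ ↦ h τ hτ
  have : Finite (𝓞 F ⧸ P) := Ideal.finiteQuotientOfFreeOfNeBot P hP0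
  have : Finite P.ResidueField := by
    exact Finite.of_surjective _ (Ideal.bijective_algebraMap_quotient_residueField P).2
  have hc := Ideal.card_stabilizer_eq_card_inertia_mul_finrank (G := Gal(L/F)) P Q
  rw [hstab, Subgroup.card_bot] at hc
  have : Q.IsMaximal := Ideal.IsMaximal.of_liesOver_isMaximal Q P
  have h1 : P.inertiaDeg' Q = 1 := by
    rw [Ideal.inertiaDeg'_eq_inertiaDeg]
    exact Nat.eq_one_of_mul_eq_one_left hc.symm
  rw [Ideal.absNorm_eq_pow_inertiaDeg'_of_liesOver Q P ‹_› hP0, h1, pow_one]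

open Polynomial in
/-- If `K` contains the `m`-th roots of unity, an integer of `K` that is an `m`-th power modulo
almost all primes is an `m`-th power. -/
theorem exists_pow_eq_of_isPrimitiveRoot {K : Type*} [Field K] [NumberField K] {m : ℕ}
    (hm : m ≠ 0) {ζ : K} (hζ : IsPrimitiveRoot ζ m) (x : 𝓞 K) (hx : x ≠ 0)
    (h : {P : HeightOneSpectrum (𝓞 K) | ¬ ∃ a : 𝓞 K, a ^ m - x ∈ P.asIdeal}.Finite) :
    ∃ y : K, y ^ m = x := by
  by_contra hcon
  have : NeZero m := ⟨hm⟩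
  have hxK : (x : K) ≠ 0 := by simpa using hx
  let p : K[X] := X ^ m - C (x : K)
  let L := p.SplittingField
  have : NumberField L := NumberField.of_module_finite K L
  have hsep : p.Separable := separable_X_pow_sub_C _ (by exact_mod_cast hm) hxK
  have : IsGalois K L := IsGalois.of_separable_splitting_field hsep
  have hroot : ∃ α : L, α ^ m = algebraMap K L x := by
    obtain ⟨α, hα⟩ := Polynomial.Splits.exists_eval_eq_zero (SplittingField.splits p) (by
      rw [degree_map, degree_X_pow_sub_C (Nat.pos_of_ne_zero hm)]
      exact_mod_cast hm)
    exact ⟨α, by simpa [p, sub_eq_zero] using hα⟩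
  obtain ⟨α, hα⟩ := hroot
  obtain ⟨σ, hσ⟩ : ∃ σ : Gal(L/K), σ α ≠ α := by
    by_contra! hfix
    obtain ⟨y, hy⟩ := IntermediateField.mem_bot.mp ((IsGalois.mem_bot_iff_fixed α).mpr hfix)
    refine hcon ⟨y, (algebraMap K L).injective ?_⟩
    rw [map_pow, hy, hα]
  have hfinite (z : 𝓞 K) (hz : z ≠ 0) : {P : HeightOneSpectrum (𝓞 K) | z ∈ P.asIdeal}.Finite := by
    refine (Ideal.finite_factors (I := Ideal.span {z}) (by simpa using hz)).subset fun P hP ↦ ?_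
    exact Ideal.dvd_span_singleton.mpr hP
  refine infinite_setOf_not_exists_two_primes_over K L
    (((h.union (hfinite x hx)).union (hfinite (m : 𝓞 K) (by exact_mod_cast hm))).subset
      fun P hP ↦ ?_)
  by_contra hbad
  simp only [Set.mem_union, Set.mem_ofPred_eq, not_or, not_not] at hbad
  obtain ⟨⟨⟨a, ha⟩, hxP⟩, hmP⟩ := hbad
  refine hP ?_
  have hmax := P.isMaximal
  have hPprime := P.isPrime
  have hstab (Q : Ideal (𝓞 L)) [Q.IsPrime] [Q.LiesOver P.asIdeal] (τ : Gal(L/K))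
      (hτ : τ • Q = Q) : τ = 1 := by
    have hmem (z : 𝓞 K) : algebraMap (𝓞 K) (𝓞 L) z ∈ Q ↔ z ∈ P.asIdeal :=
      (Ideal.mem_of_liesOver Q P.asIdeal z).symm
    refine Polynomial.Gal.ext (p := p) fun β hβ ↦ ?_
    have hβm : β ^ m = algebraMap K L x := by
      have := (Polynomial.mem_rootSet.mp hβ).2
      simpa [p, sub_eq_zero] using this
    have hβint : IsIntegral ℤ β := by
      refine IsIntegral.of_pow (Nat.pos_of_ne_zero hm) ?_
      rw [hβm]
      exact x.isIntegral_coe.algebraMap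
    let b : 𝓞 L := ⟨β, hβint⟩
    have hbm : b ^ m = algebraMap (𝓞 K) (𝓞 L) x := by
      apply RingOfIntegers.ext
      exact hβm
    have hz := hζ.toInteger_isPrimitiveRoot.map_of_injective
      (FaithfulSMul.algebraMap_injective (𝓞 K) (𝓞 L))
    obtain ⟨ω, hω, hωQ⟩ : ∃ ω : 𝓞 K, ω ^ m = 1 ∧ b - algebraMap (𝓞 K) (𝓞 L) (ω * a) ∈ Q := by
      have hprod : ∏ ω ∈ nthRootsFinset m (1 : 𝓞 L), (b - ω * algebraMap (𝓞 K) (𝓞 L) a) ∈ Q := by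
        rw [← hz.pow_sub_pow_eq_prod_sub_mul _ _ (Nat.pos_of_ne_zero hm), hbm, ← map_pow,
          ← map_sub, hmem, ← neg_mem_iff, neg_sub]
        exact ha
      obtain ⟨ω, hω, hωQ⟩ := (Ideal.IsPrime.prod_mem_iff (p := Q)).mp hprod
      obtain ⟨i, -, rfl⟩ := hz.eq_pow_of_pow_eq_one ((mem_nthRootsFinset (Nat.pos_of_ne_zero hm) _).mp hω)
      refine ⟨hζ.toInteger ^ i, ?_, ?_⟩
      · rw [← pow_mul, mul_comm, pow_mul, hζ.toInteger_isPrimitiveRoot.pow_eq_one, one_pow]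
      · rwa [map_mul, map_pow]
    have hτb : τ • b - algebraMap (𝓞 K) (𝓞 L) (ω * a) ∈ Q := by
      have := Ideal.smul_mem_pointwise_smul τ _ Q hωQ
      rwa [hτ, smul_sub, smul_algebraMap] at this
    have hsub : τ • b - b ∈ Q := by simpa using Q.sub_mem hτb hωQ
    have heq : τ • b = b := by
      refine eq_of_pow_eq_pow_of_sub_mem Q (m := m) ?_ ?_ ?_ hsub
      · rw [← map_natCast (algebraMap (𝓞 K) (𝓞 L)), hmem]
        exact hmP
      · intro hbQ
        refine hxP ((hmem x).mp ?_)
        rw [← hbm]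
        exact Ideal.pow_mem_of_mem Q hbQ m (Nat.pos_of_ne_zero hm)
      · rw [← smul_pow', hbm, smul_algebraMap]
    exact congrArg (algebraMap (𝓞 L) L) heq
  obtain ⟨Q, hQprime, hQ⟩ := (inferInstance : Nonempty (P.asIdeal.primesOver (𝓞 L)))
  have hQ0 : Q ≠ ⊥ := Ideal.ne_bot_of_liesOver_of_ne_bot P.ne_bot Q
  have hσQ0 : σ • Q ≠ ⊥ := Ideal.ne_bot_of_liesOver_of_ne_bot P.ne_bot (σ • Q)
  refine ⟨⟨Q, hQprime, hQ0⟩, ⟨σ • Q, inferInstance, hσQ0⟩, fun heq ↦ hσ ?_,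
    ⟨(Ideal.over_def Q P.asIdeal).symm, absNorm_eq_of_stabilizer_eq_bot _ P.ne_bot Q (hstab Q)⟩,
    ⟨(Ideal.over_def (σ • Q) P.asIdeal).symm,
      absNorm_eq_of_stabilizer_eq_bot _ P.ne_bot (σ • Q) (hstab (σ • Q))⟩⟩
  have := hstab Q σ (congrArg HeightOneSpectrum.asIdeal heq).symm
  rw [this]
  rfl

theorem finite_setOf_not_exists_pow_sub_mem_map {k K : Type*} [Field k] [NumberField k]
    [Field K] [NumberField K] [Algebra k K] {m : ℕ} (x : 𝓞 k)
    (h : {P : HeightOneSpectrum (𝓞 k) | ¬ ∃ a : 𝓞 k, a ^ m - x ∈ P.asIdeal}.Finite) :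
    {Q : HeightOneSpectrum (𝓞 K) |
      ¬ ∃ a : 𝓞 K, a ^ m - algebraMap (𝓞 k) (𝓞 K) x ∈ Q.asIdeal}.Finite := by
  have hfin : (⋃ P ∈ {P : HeightOneSpectrum (𝓞 k) | ¬ ∃ a : 𝓞 k, a ^ m - x ∈ P.asIdeal},
      P.asIdeal.primesOver (𝓞 K)).Finite := by
    refine h.biUnion fun P _ ↦ ?_
    have := P.isMaximal
    exact IsDedekindDomain.primesOver_finite P.asIdeal (𝓞 K)
  refine Set.Finite.of_finite_image (f := HeightOneSpectrum.asIdeal) (hfin.subset ?_)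
    fun Q _ Q' _ hQ ↦ HeightOneSpectrum.ext hQ
  rintro _ ⟨Q, hQ, rfl⟩
  have hbot : Q.asIdeal.under (𝓞 k) ≠ ⊥ := fun h0 ↦
    Q.ne_bot (Ideal.eq_bot_of_comap_eq_bot h0)
  have hprime : (Q.asIdeal.under (𝓞 k)).IsPrime := Q.isPrime.under (𝓞 k)
  refine Set.mem_biUnion (x := ⟨Q.asIdeal.under (𝓞 k), hprime, hbot⟩) ?_ ⟨Q.isPrime, ⟨rfl⟩⟩
  rintro ⟨a, ha⟩
  refine hQ ⟨algebraMap (𝓞 k) (𝓞 K) a, ?_⟩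
  rw [← map_pow, ← map_sub]
  exact ha

theorem exists_pow_eq_algebraMap_of_isPrimitiveRoot {k K : Type*} [Field k] [NumberField k]
    [Field K] [NumberField K] [Algebra k K] {m : ℕ} (hm : m ≠ 0) {ζ : K}
    (hζ : IsPrimitiveRoot ζ m) (x : 𝓞 k) (hx : x ≠ 0)
    (h : {P : HeightOneSpectrum (𝓞 k) | ¬ ∃ a : 𝓞 k, a ^ m - x ∈ P.asIdeal}.Finite) :
    ∃ y : K, y ^ m = algebraMap k K x := by
  obtain ⟨y, hy⟩ := exists_pow_eq_of_isPrimitiveRoot hm hζ (algebraMap (𝓞 k) (𝓞 K) x)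
    (by simpa using hx) (finite_setOf_not_exists_pow_sub_mem_map x h)
  exact ⟨y, hy⟩

/-- A concrete form of the vanishing of `H¹` of a cyclic group, generated by `a = t + 1`,
of automorphisms of `ℤ / p ^ r` for odd `p`. -/
theorem exists_dvd_mul_add_of_geom_sum {p r t b : ℕ} (hp : p.Prime) (hp2 : p ≠ 2) (ht : t ≠ 0)
    (h : ∀ n, p ^ r ∣ (t + 1) ^ n - 1 → p ^ r ∣ b * ∑ i ∈ Finset.range n, (t + 1) ^ i) :
    ∃ c : ℤ, (p ^ r : ℤ) ∣ t * c + b := by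
  have : Fact p.Prime := ⟨hp⟩
  obtain ⟨v, hv, hgcd⟩ := (Nat.dvd_prime_pow hp).mp (Nat.gcd_dvd_right t (p ^ r))
  suffices hb : p ^ v ∣ b by
    rw [← hgcd] at hb
    obtain ⟨c, hc⟩ := hb
    refine ⟨-(c * t.gcdA (p ^ r)), c * t.gcdB (p ^ r), ?_⟩
    have hbez := Nat.gcd_eq_gcd_ab t (p ^ r)
    rw [hc]
    push_cast at hbez ⊢
    rw [hbez]
    ring
  rcases Nat.eq_zero_or_pos v with rfl | hv0
  · simp
  have hvt : p ^ v ∣ t := hgcd ▸ Nat.gcd_dvd_left t (p ^ r)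
  have hpt : p ∣ t := (dvd_pow_self p hv0.ne').trans hvt
  rcases hv.eq_or_lt with rfl | hlt
  · simpa using h 1 (by simpa using hvt)
  have hval : padicValNat p t = v := by
    apply le_antisymm
    · by_contra! hlt'
      have h1 : p ^ (v + 1) ∣ t := (pow_dvd_pow p hlt').trans pow_padicValNat_dvd
      have h2 := Nat.dvd_gcd h1 (pow_dvd_pow p (Nat.succ_le_of_lt hlt))
      rw [hgcd] at h2
      exact absurd ((Nat.pow_dvd_pow_iff_le_right hp.one_lt).mp h2) (by simp)
    · exact (padicValNat_dvd_iff_le ht).mp hvt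
  have hlte : padicValNat p ((t + 1) ^ p ^ (r - v) - 1) = r := by
    have := padicValNat.pow_sub_pow (p := p) (hp.odd_of_ne_two hp2) (x := t + 1) (y := 1)
      (by omega) (by simpa using hpt) (fun hd ↦ hp.one_lt.ne'
        (Nat.dvd_one.mp ((Nat.dvd_add_right hpt).mp hd))) (n := p ^ (r - v))
      (pow_ne_zero _ hp.ne_zero)
    simp only [one_pow, add_tsub_cancel_right, hval, padicValNat.prime_pow] at this
    omega
  have hd := h (p ^ (r - v)) (by
    conv_lhs => rw [← hlte]
    exact pow_padicValNat_dvd)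
  have hgs : t * ∑ i ∈ Finset.range (p ^ (r - v)), (t + 1) ^ i = (t + 1) ^ p ^ (r - v) - 1 := by
    have := geom_sum_mul_add t (p ^ (r - v))
    rw [← this, mul_comm, Nat.add_sub_cancel]
  have hS0 : ∑ i ∈ Finset.range (p ^ (r - v)), (t + 1) ^ i ≠ 0 := by
    refine (Finset.sum_pos (fun i _ ↦ by positivity) ?_).ne'
    simp [hp.ne_zero]
  have hvalS : padicValNat p (∑ i ∈ Finset.range (p ^ (r - v)), (t + 1) ^ i) = r - v := by
    have := padicValNat.mul (p := p) ht hS0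
    rw [hgs, hlte, hval] at this
    omega
  rcases eq_or_ne b 0 with rfl | hb0
  · simp
  rw [padicValNat_dvd_iff_le (mul_ne_zero hb0 hS0), padicValNat.mul hb0 hS0, hvalS] at hd
  rw [padicValNat_dvd_iff_le hb0]
  omega

theorem IsPrimitiveRoot.algEquiv_eq_of_apply_eq {m : ℕ} [NeZero m] (k : Type*) {K : Type*}
    [Field k] [Field K] [Algebra k K] [IsCyclotomicExtension {m} k K] {ζ : K}
    (hζ : IsPrimitiveRoot ζ m) {σ τ : Gal(K/k)} (h : σ ζ = τ ζ) : σ = τ := by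
  apply hζ.autToPow_injective (K := k)
  ext
  apply ZMod.val_injective
  refine hζ.pow_inj (ZMod.val_lt _) (ZMod.val_lt _) ?_
  rw [hζ.autToPow_spec k σ, h, hζ.autToPow_spec k τ]

theorem exists_pow_eq_of_odd_prime_pow {k : Type*} [Field k] [NumberField k] {p r : ℕ}
    (hp : p.Prime) (hp2 : p ≠ 2) (x : 𝓞 k) (hx : x ≠ 0)
    (h : {P : HeightOneSpectrum (𝓞 k) | ¬ ∃ a : 𝓞 k, a ^ (p ^ r) - x ∈ P.asIdeal}.Finite) :
    ∃ y : k, y ^ (p ^ r) = x := by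
  have hm : p ^ r ≠ 0 := pow_ne_zero _ hp.ne_zero
  have : NeZero (p ^ r) := ⟨hm⟩
  let K := CyclotomicField (p ^ r) k
  have : NumberField K := IsCyclotomicExtension.numberField {p ^ r} k K
  have : IsGalois k K := IsCyclotomicExtension.isGalois {p ^ r} k K
  have hζ : IsPrimitiveRoot (IsCyclotomicExtension.zeta (p ^ r) k K) (p ^ r) :=
    IsCyclotomicExtension.zeta_spec (p ^ r) k K
  set ζ := IsCyclotomicExtension.zeta (p ^ r) k K
  have hinj := hζ.autToPow_injective (K := k)
  obtain ⟨y, hy⟩ := exists_pow_eq_algebraMap_of_isPrimitiveRoot hm hζ x hx h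
  have hy0 : y ≠ 0 := by
    rintro rfl
    rw [zero_pow hm] at hy
    exact hx (by simpa using hy.symm)
  have : IsCyclic (ZMod (p ^ r))ˣ := ZMod.isCyclic_units_of_prime_pow p hp hp2 r
  have : IsCyclic Gal(K/k) := isCyclic_of_injective (hζ.autToPow k) hinj
  obtain ⟨σ, hσ⟩ := IsCyclic.exists_generator (α := Gal(K/k))
  obtain ⟨t, ht0, ht⟩ : ∃ t : ℕ, t ≠ 0 ∧ σ ζ = ζ ^ (t + 1) := by
    refine ⟨(hζ.autToPow k σ : ZMod (p ^ r)).val + (2 * p ^ r - 1), by omega, ?_⟩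
    rw [← hζ.autToPow_spec k σ, show ∀ s, s + (2 * p ^ r - 1) + 1 = s + p ^ r * 2 by omega,
      pow_add, pow_mul, hζ.pow_eq_one, one_pow, mul_one]
  obtain ⟨b, hb⟩ : ∃ b : ℕ, σ y = ζ ^ b * y := by
    obtain ⟨b, -, hb⟩ := hζ.eq_pow_of_pow_eq_one (ξ := σ y / y) (by
      rw [div_pow, ← map_pow, hy, AlgEquiv.commutes, div_self]
      rw [← hy]
      exact pow_ne_zero _ hy0)
    exact ⟨b, by rw [hb, div_mul_cancel₀ _ hy0]⟩
  have hpowζ (n : ℕ) : (σ ^ n) ζ = ζ ^ ((t + 1) ^ n) := by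
    induction n with
    | zero => simp
    | succ n ih => rw [pow_succ, AlgEquiv.mul_apply, ht, map_pow, ih, ← pow_mul, ← pow_succ]
  have hpowy (n : ℕ) : (σ ^ n) y = ζ ^ (b * ∑ i ∈ Finset.range n, (t + 1) ^ i) * y := by
    induction n with
    | zero => simp
    | succ n ih =>
      rw [pow_succ, AlgEquiv.mul_apply, hb, map_mul, map_pow, ih, hpowζ, Finset.sum_range_succ,
        mul_add, pow_add, ← pow_mul]
      ring
  obtain ⟨c, hc⟩ := exists_dvd_mul_add_of_geom_sum (r := r) (b := b) hp hp2 ht0 fun n hn ↦ by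
    have h1 : σ ^ n = 1 := by
      apply hζ.algEquiv_eq_of_apply_eq k
      obtain ⟨d, hd⟩ := hn
      have h1 : 1 ≤ (t + 1) ^ n := Nat.one_le_pow _ _ (by omega)
      rw [hpowζ, ← Nat.sub_add_cancel h1, hd, pow_add, pow_mul, hζ.pow_eq_one, one_pow, one_mul,
        pow_one, AlgEquiv.one_apply]
    have h2 := hpowy n
    rw [h1, AlgEquiv.one_apply] at h2
    rw [← hζ.pow_eq_one_iff_dvd]
    exact mul_right_cancel₀ hy0 (by rw [← h2, one_mul])
  have hζ0 : ζ ≠ 0 := hζ.ne_zero hm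
  have hfix : σ (ζ ^ c * y) = ζ ^ c * y := by
    have h1 : ζ ^ (t * c + b : ℤ) = 1 := by
      rw [hζ.zpow_eq_one_iff_dvd]
      exact_mod_cast hc
    rw [map_mul, map_zpow₀, ht, hb, ← zpow_natCast, ← zpow_natCast, ← zpow_mul, ← mul_assoc,
      ← zpow_add₀ hζ0, show ((t + 1 : ℕ) : ℤ) * c + b = t * c + b + c by push_cast; ring,
      zpow_add₀ hζ0, h1, one_mul]
  obtain ⟨z, hz⟩ := IntermediateField.mem_bot.mp
    ((IsGalois.mem_bot_iff_fixed (F := k) (ζ ^ c * y)).mpr fun τ ↦ by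
      have h1 : Subgroup.zpowers σ ≤ MulAction.stabilizer Gal(K/k) (ζ ^ c * y) := by
        rw [Subgroup.zpowers_le]
        exact hfix
      exact h1 (hσ τ))
  refine ⟨z, (algebraMap k K).injective ?_⟩
  rw [map_pow, hz, mul_pow, hy, ← zpow_natCast, ← zpow_mul, mul_comm c, zpow_mul, zpow_natCast,
    hζ.pow_eq_one, one_zpow, one_mul]

theorem exists_sq_eq_of_forall_prime {k : Type*} [Field k] [NumberField k] (x : 𝓞 k) (hx : x ≠ 0)
    (h : {P : HeightOneSpectrum (𝓞 k) | ¬ ∃ a : 𝓞 k, a ^ 2 - x ∈ P.asIdeal}.Finite) :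
    ∃ y : k, y ^ 2 = x :=
  exists_pow_eq_of_isPrimitiveRoot two_ne_zero (IsPrimitiveRoot.neg_one 0 (by norm_num)) x hx h

theorem exists_pow_four_eq_of_forall_prime {k : Type*} [Field k] [NumberField k] (x : 𝓞 k)
    (hx : x ≠ 0)
    (h : {P : HeightOneSpectrum (𝓞 k) | ¬ ∃ a : 𝓞 k, a ^ 4 - x ∈ P.asIdeal}.Finite) :
    ∃ y : k, y ^ 4 = x := by
  obtain ⟨u, hu⟩ := exists_sq_eq_of_forall_prime x hx (h.subset fun P hP ↦ by
    rintro ⟨a, ha⟩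
    exact hP ⟨a ^ 2, by rwa [← pow_mul]⟩)
  let K := CyclotomicField 4 k
  have : NumberField K := IsCyclotomicExtension.numberField {4} k K
  have : IsGalois k K := IsCyclotomicExtension.isGalois {4} k K
  have hi : IsPrimitiveRoot (IsCyclotomicExtension.zeta 4 k K) 4 :=
    IsCyclotomicExtension.zeta_spec 4 k K
  set i := IsCyclotomicExtension.zeta 4 k K
  have hi2 : i ^ 2 = -1 :=
    (hi.pow (by norm_num) (show 4 = 2 * 2 by norm_num)).eq_neg_one_of_two_right
  have hdescend (w : K) (hw : w ^ 4 = algebraMap k K x) (hfix : ∀ σ : Gal(K/k), σ w = w) :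
      ∃ y : k, y ^ 4 = x := by
    obtain ⟨z, hz⟩ := IntermediateField.mem_bot.mp ((IsGalois.mem_bot_iff_fixed w).mpr hfix)
    exact ⟨z, (algebraMap k K).injective (by rw [map_pow, hz, hw])⟩
  obtain ⟨y, hy⟩ := exists_pow_eq_algebraMap_of_isPrimitiveRoot four_ne_zero hi x hx h
  obtain ⟨w, hw⟩ : ∃ w : K, w ^ 2 = algebraMap k K u := by
    have hyu : (y ^ 2) ^ 2 = (algebraMap k K u) ^ 2 := by rw [← pow_mul, hy, ← map_pow, hu]
    rcases sq_eq_sq_iff_eq_or_eq_neg.mp hyu with hyu | hyu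
    · exact ⟨y, hyu⟩
    · exact ⟨i * y, by rw [mul_pow, hi2, hyu]; ring⟩
  have hw4 : w ^ 4 = algebraMap k K x := by rw [← hu, map_pow, ← hw]; ring
  by_cases hfix : ∀ σ : Gal(K/k), σ w = w
  · exact hdescend w hw4 hfix
  push Not at hfix
  obtain ⟨σ, hσ⟩ := hfix
  have hneg {τ : Gal(K/k)} {z : K} {a : k} (hz : z ^ 2 = algebraMap k K a) (hτ : τ z ≠ z) :
      τ z = -z := by
    refine (sq_eq_sq_iff_eq_or_eq_neg.mp ?_).resolve_left hτ
    rw [← map_pow, hz, AlgEquiv.commutes]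
  have hineg {τ : Gal(K/k)} (hτ : τ ≠ 1) : τ i = -i :=
    hneg (a := -1) (by simpa using hi2) fun h ↦ hτ (hi.algEquiv_eq_of_apply_eq k h)
  have hσ1 : σ ≠ 1 := by
    rintro rfl
    exact hσ rfl
  refine hdescend (i * w) (by rw [mul_pow, hw4, hi.pow_eq_one, one_mul]) fun τ ↦ ?_
  by_cases hτ : τ = 1
  · rw [hτ, AlgEquiv.one_apply]
  · obtain rfl : τ = σ := hi.algEquiv_eq_of_apply_eq k (by rw [hineg hτ, hineg hσ1])
    rw [map_mul, hineg hτ, hneg hw hσ, neg_mul_neg]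

theorem exists_pow_eq_of_forall_prime {k : Type*} [Field k] [NumberField k] (m : ℕ) (hm : m ≠ 0)
    (h8 : ¬ 8 ∣ m) (x : 𝓞 k) (hx : x ≠ 0)
    (h : {P : HeightOneSpectrum (𝓞 k) | ¬ ∃ a : 𝓞 k, a ^ m - x ∈ P.asIdeal}.Finite) :
    ∃ y : k, y ^ m = x := by
  induction m using Nat.recOnPosPrimePosCoprime with
  | zero => exact absurd rfl hm
  | one => exact ⟨x, pow_one _⟩
  | prime_pow p n hp hn =>
    rcases eq_or_ne p 2 with rfl | hp2
    · have hn3 : n < 3 := by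
        by_contra! hle
        exact h8 (pow_dvd_pow 2 hle)
      interval_cases n
      · exact exists_sq_eq_of_forall_prime x hx (by simpa using h)
      · exact exists_pow_four_eq_of_forall_prime x hx (by simpa using h)
    · exact exists_pow_eq_of_odd_prime_pow hp hp2 x hx h
  | coprime a b ha hb hab iha ihb =>
    obtain ⟨y, hy⟩ := iha (by omega) (fun h ↦ h8 (h.mul_right b)) (h.subset fun P hP ↦ by
      rintro ⟨c, hc⟩
      exact hP ⟨c ^ b, by rwa [← pow_mul, mul_comm b]⟩)
    obtain ⟨z, hz⟩ := ihb (by omega) (fun h ↦ h8 (h.mul_left a)) (h.subset fun P hP ↦ by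
      rintro ⟨c, hc⟩
      exact hP ⟨c ^ a, by rwa [← pow_mul]⟩)
    have hx0 : (x : k) ≠ 0 := by simpa using hx
    have hbez : (a * a.gcdA b + b * a.gcdB b : ℤ) = 1 := by
      rw [← Nat.gcd_eq_gcd_ab, hab.gcd_eq_one, Nat.cast_one]
    refine ⟨z ^ a.gcdA b * y ^ a.gcdB b, ?_⟩
    have h1 : (z ^ a.gcdA b) ^ (a * b) = (x : k) ^ (a * a.gcdA b : ℤ) := by
      rw [← hz, ← zpow_natCast, ← zpow_natCast, ← zpow_mul, ← zpow_mul]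
      push_cast
      ring_nf
    have h2 : (y ^ a.gcdB b) ^ (a * b) = (x : k) ^ (b * a.gcdB b : ℤ) := by
      rw [← hy, ← zpow_natCast, ← zpow_natCast, ← zpow_mul, ← zpow_mul]
      push_cast
      ring_nf
    rw [mul_pow, h1, h2, ← zpow_add₀ hx0, hbez, zpow_one]

end

/-- The non-exceptional case of the Grunwald–Wang theorem: let `k` be a number field,
`m` a positive integer not divisible by `8`, and `x ∈ k`. If for all but finitely many
finite places `v` of `k` the image of `x` in the completion `k_v` is an `m`-th power,
then `x` is an `m`-th power in `k`. -/
theorem grunwald_wang_non_exceptional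
    (k : Type*) [Field k] [NumberField k] (m : ℕ) (hm : 0 < m) (h8 : ¬ (8 ∣ m)) (x : k)
    (hloc : {v : HeightOneSpectrum (NumberField.RingOfIntegers k) |
        ¬ ∃ y : v.adicCompletion k,
          y ^ m = algebraMap k (v.adicCompletion k) x}.Finite) :
    ∃ y : k, y ^ m = x := by
  rcases eq_or_ne x 0 with rfl | hx
  · exact ⟨0, zero_pow hm.ne'⟩
  obtain ⟨n, d, hd, rfl⟩ := IsFractionRing.div_surjective (A := 𝓞 k) x
  have hd0 : algebraMap (𝓞 k) k d ≠ 0 := by simpa using nonZeroDivisors.ne_zero hd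
  have hX : algebraMap (𝓞 k) k (n * d ^ (m - 1)) =
      algebraMap (𝓞 k) k n / algebraMap (𝓞 k) k d * algebraMap (𝓞 k) k d ^ m := by
    rw [map_mul, map_pow, ← mul_pow_sub_one hm.ne' (algebraMap (𝓞 k) k d), ← mul_assoc,
      div_mul_cancel₀ _ hd0]
  have hX0 : n * d ^ (m - 1) ≠ 0 := by
    intro h0
    rw [h0, map_zero] at hX
    exact mul_ne_zero hx (pow_ne_zero m hd0) hX.symm
  obtain ⟨y, hy⟩ := exists_pow_eq_of_forall_prime m hm.ne' h8 (n * d ^ (m - 1)) hX0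
    (hloc.subset fun v hv ↦ by
      rintro ⟨y, hy⟩
      refine hv (exists_pow_sub_mem_of_exists_pow_eq k v hm.ne' _
        (y * algebraMap k (v.adicCompletion k) (algebraMap (𝓞 k) k d)) ?_)
      rw [hX, mul_pow, hy, map_mul, map_pow])
  refine ⟨y / algebraMap (𝓞 k) k d, ?_⟩
  rw [div_pow, hy, div_eq_iff (pow_ne_zero m hd0)]
  exact hX
end

section
/- The equation x^8 = 16 has a solution in the p-adic field ℚ_p for every prime p ≠ 2, but it has no solution in ℚ_2 and no solution in ℚ. -/
/-- A prime field of odd characteristic contains a root of `x ^ 8 = 16`, because one of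
`2`, `-2`, `-1` is a square in it. -/
theorem ZMod.exists_pow_eight_eq_sixteen (p : ℕ) [Fact p.Prime] (hp : p ≠ 2) :
    ∃ y : ZMod p, y ^ 8 = 16 := by
  have hodd : p % 2 = 1 := (Fact.out : p.Prime).eq_two_or_odd.resolve_left hp
  by_cases h2 : IsSquare (2 : ZMod p)
  · obtain ⟨y, hy⟩ := h2
    exact ⟨y, by linear_combination -(y ^ 6 + 2 * y ^ 4 + 4 * y ^ 2 + 8) * hy⟩
  by_cases hneg2 : IsSquare (-2 : ZMod p)
  · obtain ⟨y, hy⟩ := hneg2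
    exact ⟨y, by linear_combination -(y ^ 6 - 2 * y ^ 4 + 4 * y ^ 2 - 8) * hy⟩
  have hneg1 : IsSquare (-1 : ZMod p) := by
    rw [ZMod.exists_sq_eq_two_iff hp] at h2
    rw [ZMod.exists_sq_eq_neg_two_iff hp] at hneg2
    rw [ZMod.exists_sq_eq_neg_one_iff]
    omega
  obtain ⟨i, hi⟩ := hneg1
  have hsq : (1 + i) ^ 2 = 2 * i := by linear_combination -hi
  refine ⟨1 + i, ?_⟩
  calc (1 + i) ^ 8 = ((1 + i) ^ 2) ^ 4 := by ring
    _ = 16 * (i * i) ^ 2 := by rw [hsq]; ring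
    _ = 16 := by rw [← hi]; ring

/-- Hensel lifting of `n`-th roots: if `n` is prime to `p`, then a nonzero root of `y ^ n = a`
modulo `p` lifts to a root in `ℤ_[p]`. -/
theorem PadicInt.exists_pow_eq_of_zmod (p : ℕ) [Fact p.Prime] {n : ℕ} {a : ℤ_[p]} {y : ZMod p}
    (hn : (n : ZMod p) ≠ 0) (hy : y ≠ 0) (h : y ^ n = PadicInt.toZMod a) :
    ∃ z : ℤ_[p], z ^ n = a := by
  obtain ⟨b, rfl⟩ := ZMod.ringHom_surjective (PadicInt.toZMod (p := p)) y
  have norm_lt_one_iff (x : ℤ_[p]) : ‖x‖ < 1 ↔ PadicInt.toZMod x = 0 := by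
    rw [← PadicInt.mem_nonunits, ← RingHom.mem_ker, PadicInt.ker_toZMod,
      IsLocalRing.mem_maximalIdeal]
  let F : Polynomial ℤ_[p] := Polynomial.X ^ n - Polynomial.C a
  have hF : ‖F.aeval b‖ < 1 := by
    rw [norm_lt_one_iff]
    simp [F, h]
  have hF' : ‖F.derivative.aeval b‖ = 1 := by
    refine le_antisymm (PadicInt.norm_le_one _) (not_lt.mp fun hlt => ?_)
    rw [norm_lt_one_iff] at hlt
    have hzero : (n : ZMod p) * PadicInt.toZMod b ^ (n - 1) = 0 := by
      simpa [F, Polynomial.derivative_X_pow] using hlt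
    exact mul_ne_zero hn (pow_ne_zero _ hy) hzero
  obtain ⟨z, hz, -⟩ := hensels_lemma (F := F) (a := b) (by rwa [hF', one_pow])
  exact ⟨z, by simpa [F, sub_eq_zero] using hz⟩

/-- The equation `x ^ 8 = 16` has no solution in `ℚ_[2]`: the valuation of `16` is `4`. -/
theorem Padic.two_pow_eight_ne_sixteen (x : ℚ_[2]) : x ^ 8 ≠ 16 := by
  intro hx
  have h16 : (16 : ℚ_[2]) = ((2 : ℕ) : ℚ_[2]) ^ 4 := by norm_num
  have hv := congrArg Padic.valuation hx
  rw [h16, Padic.valuation_pow, Padic.valuation_pow, Padic.valuation_p] at hv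
  omega

/-- Trost (1948): the equation `x^8 = 16` has a solution in the `p`-adic field `ℚ_p`
for every prime `p ≠ 2`, but it has no solution in `ℚ_2` and no solution in `ℚ`. -/
theorem trost_x_pow_eight_eq_sixteen :
    (∀ (p : ℕ) [Fact p.Prime], p ≠ 2 → ∃ x : ℚ_[p], x ^ 8 = 16) ∧
    (¬ ∃ x : ℚ_[2], x ^ 8 = 16) ∧
    (¬ ∃ x : ℚ, x ^ 8 = 16) := by
  refine ⟨fun p _ hp => ?_, fun ⟨x, hx⟩ => Padic.two_pow_eight_ne_sixteen x hx,
    fun ⟨x, hx⟩ => Padic.two_pow_eight_ne_sixteen x (by exact_mod_cast congrArg Rat.cast hx)⟩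
  obtain ⟨y, hy⟩ := ZMod.exists_pow_eight_eq_sixteen p hp
  have h2 : (2 : ZMod p) ≠ 0 :=
    Ring.two_ne_zero (by rwa [ZMod.ringChar_zmod_n])
  have h8 : ((8 : ℕ) : ZMod p) ≠ 0 := by
    have : ((8 : ℕ) : ZMod p) = 2 ^ 3 := by norm_num
    exact this ▸ pow_ne_zero 3 h2
  have hy0 : y ≠ 0 := by
    rintro rfl
    have : (16 : ZMod p) = 2 ^ 4 := by norm_num
    exact pow_ne_zero 4 h2 (by rw [← this, ← hy]; simp)
  obtain ⟨z, hz⟩ := PadicInt.exists_pow_eq_of_zmod p (a := 16) h8 hy0 (by rw [hy, map_ofNat])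
  exact ⟨z, by exact_mod_cast congrArg ((↑) : ℤ_[p] → ℚ_[p]) hz⟩
end

section
/- Let p be an odd prime and let n ≥ 3(p−1). There exists a finite subgroup G of SL_n(ℤ) that is a p-group, together with a 1-cocycle Z : G → (ℤ/pℤ)^n for the action of G on (ℤ/pℤ)^n obtained by reducing matrix entries modulo p, such that for every σ ∈ G there exists A_σ ∈ (ℤ/pℤ)^n with Z(σ) = σ·A_σ − A_σ, but there is no W ∈ (ℤ/pℤ)^n with Z(σ) = σ·W − W for all σ ∈ G. Equivalently, the restriction map H^1(G, 𝔽_p^n) → ∏_C H^1(C, 𝔽_p^n), the product being over all cyclic subgroups C of G, is not injective. -/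
/-- The action of `SL_n(ℤ)` on `(ℤ/pℤ)^n` obtained by reducing matrix entries modulo `p`
and applying the resulting matrix to a vector. -/
def SLnZModAct (p n : ℕ) (σ : Matrix.SpecialLinearGroup (Fin n) ℤ)
    (v : Fin n → ZMod p) : Fin n → ZMod p :=
  ((Matrix.SpecialLinearGroup.map (Int.castRingHom (ZMod p)) σ :
      Matrix.SpecialLinearGroup (Fin n) (ZMod p)) : Matrix (Fin n) (Fin n) (ZMod p)).mulVec v

open NumberField

/-! ### The reduced action -/

lemma SLnZModAct_one (p n : ℕ) (v : Fin n → ZMod p) : SLnZModAct p n 1 v = v := by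
  simp [SLnZModAct]

lemma SLnZModAct_mul (p n : ℕ) (σ τ : Matrix.SpecialLinearGroup (Fin n) ℤ)
    (v : Fin n → ZMod p) :
    SLnZModAct p n (σ * τ) v = SLnZModAct p n σ (SLnZModAct p n τ v) := by
  simp [SLnZModAct, Matrix.mulVec_mulVec]

lemma SLnZModAct_add (p n : ℕ) (σ : Matrix.SpecialLinearGroup (Fin n) ℤ)
    (v w : Fin n → ZMod p) :
    SLnZModAct p n σ (v + w) = SLnZModAct p n σ v + SLnZModAct p n σ w :=
  Matrix.mulVec_add _ _ _

lemma SLnZModAct_smul (p n : ℕ) (σ : Matrix.SpecialLinearGroup (Fin n) ℤ)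
    (c : ZMod p) (v : Fin n → ZMod p) :
    SLnZModAct p n σ (c • v) = c • SLnZModAct p n σ v :=
  Matrix.mulVec_smul _ _ _

lemma SLnZModAct_pow_fixed {p n : ℕ} {σ : Matrix.SpecialLinearGroup (Fin n) ℤ}
    {v : Fin n → ZMod p} (h : SLnZModAct p n σ v = v) (k : ℕ) :
    SLnZModAct p n (σ ^ k) v = v := by
  induction k with
  | zero => simp [SLnZModAct_one]
  | succ k ih => rw [pow_succ, SLnZModAct_mul, h, ih]

/-- If `σ` fixes `v` and `σ A - A = v`, then `σ ^ k A - A = k v`. -/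
lemma SLnZModAct_pow_sub {p n : ℕ} {σ : Matrix.SpecialLinearGroup (Fin n) ℤ}
    {v A : Fin n → ZMod p} (h : SLnZModAct p n σ v = v) (hA : SLnZModAct p n σ A - A = v)
    (k : ℕ) : SLnZModAct p n (σ ^ k) A - A = (k : ZMod p) • v := by
  induction k with
  | zero => simp [SLnZModAct_one]
  | succ k ih =>
    rw [sub_eq_iff_eq_add] at hA
    rw [pow_succ, SLnZModAct_mul, hA, SLnZModAct_add, SLnZModAct_pow_fixed h,
      add_sub_assoc, ih]
    push_cast
    rw [add_smul, one_smul, add_comm]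

/-! ### The subgroup generated by two commuting elements of order `p` -/

/-- The subgroup of all products `a ^ i * b ^ j`, for commuting `a`, `b` with
`a ^ p = b ^ p = 1`. -/
def commutingPowers {H : Type*} [Group H] {p : ℕ} (hp : 0 < p) {a b : H} (hab : Commute a b)
    (ha : a ^ p = 1) (hb : b ^ p = 1) : Subgroup H where
  carrier := {g | ∃ i j : ℕ, g = a ^ i * b ^ j}
  one_mem' := ⟨0, 0, by simp⟩
  mul_mem' := by
    rintro _ _ ⟨i, j, rfl⟩ ⟨k, l, rfl⟩
    refine ⟨i + k, j + l, ?_⟩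
    rw [pow_add, pow_add, mul_assoc, mul_assoc, ← mul_assoc (b ^ j),
      ← mul_assoc (a ^ k), (hab.pow_pow k j).eq]
  inv_mem' := by
    rintro _ ⟨i, j, rfl⟩
    refine ⟨i * (p - 1), j * (p - 1), ?_⟩
    rw [pow_mul, pow_mul, ← (hab.pow_pow i j).mul_pow, inv_eq_iff_mul_eq_one, ← pow_succ',
      Nat.sub_add_cancel hp, (hab.pow_pow i j).mul_pow, ← pow_mul, ← pow_mul, mul_comm i,
      mul_comm j, pow_mul, pow_mul, ha, hb, one_pow, one_pow, one_mul]

lemma finite_commutingPowers {H : Type*} [Group H] {p : ℕ} (hp : 0 < p) {a b : H}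
    (hab : Commute a b) (ha : a ^ p = 1) (hb : b ^ p = 1) :
    Finite (commutingPowers hp hab ha hb) := by
  refine Set.Finite.subset (Set.finite_range fun x : Fin p × Fin p =>
    a ^ (x.1 : ℕ) * b ^ (x.2 : ℕ)) ?_
  rintro _ ⟨i, j, rfl⟩
  refine ⟨(⟨i % p, Nat.mod_lt _ hp⟩, ⟨j % p, Nat.mod_lt _ hp⟩), ?_⟩
  simp only [← pow_eq_pow_mod _ ha, ← pow_eq_pow_mod _ hb]

lemma isPGroup_commutingPowers {H : Type*} [Group H] {p : ℕ} (hp : 0 < p) {a b : H}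
    (hab : Commute a b) (ha : a ^ p = 1) (hb : b ^ p = 1) :
    IsPGroup p (commutingPowers hp hab ha hb) := by
  rintro ⟨_, i, j, rfl⟩
  refine ⟨1, Subtype.ext ?_⟩
  simp only [pow_one, Subgroup.coe_pow, Subgroup.coe_one]
  rw [(hab.pow_pow i j).mul_pow, ← pow_mul, ← pow_mul, mul_comm i, mul_comm j, pow_mul, pow_mul,
    ha, hb, one_pow, one_pow, one_mul]

/-- Local-global failure from two commuting matrices `a`, `b` of order dividing `p` and a common
fixed vector `v`: the cocycle is `a ^ i * b ^ j ↦ j v`. -/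
lemma exists_locally_trivial_cocycle {p n : ℕ} (hp : p.Prime)
    {a b : Matrix.SpecialLinearGroup (Fin n) ℤ} (hab : Commute a b)
    (ha : a ^ p = 1) (hb : b ^ p = 1) {v : Fin n → ZMod p}
    (hav : SLnZModAct p n a v = v) (hbv : SLnZModAct p n b v = v)
    (hloc : ∀ i : ℕ, ∃ A, SLnZModAct p n (a ^ i * b) A - A = v)
    (hglob : ¬ ∃ W, SLnZModAct p n a W = W ∧ SLnZModAct p n b W - W = v) :
    ∃ G : Subgroup (Matrix.SpecialLinearGroup (Fin n) ℤ),
      Finite G ∧ IsPGroup p G ∧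
      ∃ Z : G → (Fin n → ZMod p),
        (∀ σ τ : G, Z (σ * τ) = Z σ +
          SLnZModAct p n (σ : Matrix.SpecialLinearGroup (Fin n) ℤ) (Z τ)) ∧
        (∀ σ : G, ∃ A : Fin n → ZMod p,
          Z σ = SLnZModAct p n (σ : Matrix.SpecialLinearGroup (Fin n) ℤ) A - A) ∧
        ¬ ∃ W : Fin n → ZMod p, ∀ σ : G,
          Z σ = SLnZModAct p n (σ : Matrix.SpecialLinearGroup (Fin n) ℤ) W - W := by
  have : Fact p.Prime := ⟨hp⟩
  have hv : v ≠ 0 := by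
    rintro rfl
    exact hglob ⟨0, by simp [SLnZModAct], by simp [SLnZModAct]⟩
  have hfix (i j : ℕ) : SLnZModAct p n (a ^ i * b ^ j) v = v := by
    rw [SLnZModAct_mul, SLnZModAct_pow_fixed hbv, SLnZModAct_pow_fixed hav]
  have hcyc (i j : ℕ) : ∃ A, SLnZModAct p n (a ^ i * b ^ j) A - A = (j : ZMod p) • v := by
    by_cases hj : (j : ZMod p) = 0
    · exact ⟨0, by simp [hj, SLnZModAct]⟩
    · obtain ⟨k, hk⟩ := ZMod.natCast_zmod_surjective ((i : ZMod p) * (j : ZMod p)⁻¹)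
      obtain ⟨A, hA⟩ := hloc k
      refine ⟨A, ?_⟩
      have hg : a ^ i * b ^ j = (a ^ k * b) ^ j := by
        rw [(hab.pow_left k).mul_pow, ← pow_mul]
        congr 1
        rw [pow_eq_pow_mod i ha, pow_eq_pow_mod (k * j) ha]
        congr 1
        refine ((ZMod.natCast_eq_natCast_iff' _ _ _).1 ?_)
        rw [Nat.cast_mul, hk, mul_assoc, inv_mul_cancel₀ hj, mul_one]
      rw [hg]
      exact SLnZModAct_pow_sub (by simpa using hfix k 1) hA j
  have hker (i j : ℕ) (h : a ^ i * b ^ j = 1) : (j : ZMod p) = 0 := by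
    obtain ⟨A, hA⟩ := hcyc i j
    rw [h, SLnZModAct_one, sub_self] at hA
    exact (smul_eq_zero.1 hA.symm).resolve_right hv
  have hmul (i j k l : ℕ) : a ^ i * b ^ j * (a ^ k * b ^ l) = a ^ (i + k) * b ^ (j + l) := by
    rw [pow_add, pow_add, mul_assoc, mul_assoc, ← mul_assoc (b ^ j),
      ← mul_assoc (a ^ k), (hab.pow_pow k j).eq]
  have hinj (i j k l : ℕ) (h : a ^ i * b ^ j = a ^ k * b ^ l) : (j : ZMod p) = l := by
    have h1 : a ^ (i + k * (p - 1)) * b ^ (j + l * (p - 1)) = 1 := by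
      rw [← hmul, h, hmul, ← mul_one_add, ← mul_one_add, Nat.add_sub_cancel' hp.one_le,
        mul_comm k, mul_comm l, pow_mul, pow_mul, ha, hb, one_pow, one_pow, one_mul]
    have h2 := hker _ _ h1
    rw [Nat.cast_add, Nat.cast_mul, Nat.cast_sub hp.one_le] at h2
    simpa [← sub_eq_add_neg, sub_eq_zero] using h2
  let G := commutingPowers hp.pos hab ha hb
  choose e f hef using fun σ : G => σ.2
  refine ⟨G, finite_commutingPowers .., isPGroup_commutingPowers hp.pos hab ha hb, fun σ => (f σ : ZMod p) • v,
    fun σ τ => ?_, fun σ => ?_, ?_⟩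
  · have h := hef (σ * τ)
    rw [Subgroup.coe_mul, hef σ, hef τ, hmul] at h
    dsimp only
    rw [← hinj _ _ _ _ h, SLnZModAct_smul, hef σ, hfix, Nat.cast_add, add_smul]
  · obtain ⟨A, hA⟩ := hcyc (e σ) (f σ)
    exact ⟨A, by rw [hef σ, hA]⟩
  · rintro ⟨W, hW⟩
    have key (i j : ℕ) : (j : ZMod p) • v = SLnZModAct p n (a ^ i * b ^ j) W - W := by
      have h := hW ⟨a ^ i * b ^ j, i, j, rfl⟩
      dsimp only at h
      rwa [← hinj _ _ _ _ (hef ⟨a ^ i * b ^ j, i, j, rfl⟩)] at h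
    refine hglob ⟨W, ?_, ?_⟩
    · simpa [sub_eq_zero, eq_comm] using key 1 0
    · simpa [eq_comm] using key 0 1

/-! ### From automorphisms of a lattice to integer matrices -/

lemma det_eq_one_of_pow_eq_one {n p : ℕ} (hp : Odd p) {A : Matrix (Fin n) (Fin n) ℤ}
    (hA : A ^ p = 1) : A.det = 1 := by
  have h : A.det ^ p = 1 := by rw [← Matrix.det_pow, hA, Matrix.det_one]
  rcases Int.isUnit_iff.1 (IsUnit.of_pow_eq_one h hp.pos.ne') with h1 | h1
  · exact h1
  · rw [h1, hp.neg_one_pow] at h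
    omega

/-- Version of `exists_locally_trivial_cocycle` for commuting endomorphisms of a free
`ℤ`-module `M`, with all conditions stated modulo `p M`. -/
lemma exists_locally_trivial_cocycle_of_lattice {p n : ℕ} (hp : p.Prime) (hodd : Odd p)
    {M : Type*} [AddCommGroup M] (B : Module.Basis (Fin n) ℤ M)
    {a b : Module.End ℤ M} (hab : Commute a b) (ha : a ^ p = 1) (hb : b ^ p = 1) {v : M}
    (hav : ∃ m, a v - v = (p : ℤ) • m) (hbv : ∃ m, b v - v = (p : ℤ) • m)
    (hloc : ∀ i : ℕ, ∃ A m, (a ^ i * b) A - A - v = (p : ℤ) • m)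
    (hglob : ∀ W m m', a W - W = (p : ℤ) • m → b W - W - v ≠ (p : ℤ) • m') :
    ∃ G : Subgroup (Matrix.SpecialLinearGroup (Fin n) ℤ),
      Finite G ∧ IsPGroup p G ∧
      ∃ Z : G → (Fin n → ZMod p),
        (∀ σ τ : G, Z (σ * τ) = Z σ +
          SLnZModAct p n (σ : Matrix.SpecialLinearGroup (Fin n) ℤ) (Z τ)) ∧
        (∀ σ : G, ∃ A : Fin n → ZMod p,
          Z σ = SLnZModAct p n (σ : Matrix.SpecialLinearGroup (Fin n) ℤ) A - A) ∧
        ¬ ∃ W : Fin n → ZMod p, ∀ σ : G,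
          Z σ = SLnZModAct p n (σ : Matrix.SpecialLinearGroup (Fin n) ℤ) W - W := by
  let T := LinearMap.toMatrixAlgEquiv B
  have hTa : T a ^ p = 1 := by rw [← map_pow, ha, map_one]
  have hTb : T b ^ p = 1 := by rw [← map_pow, hb, map_one]
  let α : Matrix.SpecialLinearGroup (Fin n) ℤ := ⟨T a, det_eq_one_of_pow_eq_one hodd hTa⟩
  let β : Matrix.SpecialLinearGroup (Fin n) ℤ := ⟨T b, det_eq_one_of_pow_eq_one hodd hTb⟩
  let r : M → (Fin n → ZMod p) := fun m k => ((B.repr m k : ℤ) : ZMod p)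
  have hr_sub (x y : M) : r (x - y) = r x - r y := by
    ext k
    simp [r]
  have hr_smul (m : M) : r ((p : ℤ) • m) = 0 := by
    ext k
    simp [r]
  have hr_ker (x : M) (hx : r x = 0) : ∃ m, x = (p : ℤ) • m := by
    have hd (k : Fin n) : ∃ c : ℤ, B.repr x k = p * c :=
      (ZMod.intCast_zmod_eq_zero_iff_dvd _ p).1 (congrFun hx k)
    choose c hc using hd
    refine ⟨B.equivFun.symm c, B.equivFun.injective ?_⟩
    rw [map_smul, LinearEquiv.apply_symm_apply]
    ext k
    simp [hc]
  have hr_surj (w : Fin n → ZMod p) : ∃ x, r x = w := by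
    choose c hc using fun k => ZMod.intCast_surjective (w k)
    refine ⟨B.equivFun.symm c, ?_⟩
    ext k
    have : B.repr (B.equivFun.symm c) k = c k :=
      congrFun (B.equivFun.apply_symm_apply c) k
    simp only [r, this, hc]
  have hr_act (σ : Matrix.SpecialLinearGroup (Fin n) ℤ) (f : Module.End ℤ M)
      (hσ : (σ : Matrix (Fin n) (Fin n) ℤ) = T f) (x : M) :
      SLnZModAct p n σ (r x) = r (f x) := by
    ext k
    have h : B.repr (f x) k = (T f).mulVec (B.repr x) k := by
      exact (congrFun (LinearMap.toMatrix_mulVec_repr B B f x) k).symm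
    simp only [r, h, SLnZModAct]
    rw [← hσ]
    exact (RingHom.map_mulVec (Int.castRingHom (ZMod p)) _ _ k).symm
  have hαβ (i : ℕ) : ((α ^ i * β : Matrix.SpecialLinearGroup (Fin n) ℤ) :
      Matrix (Fin n) (Fin n) ℤ) = T (a ^ i * b) := by
    rw [Matrix.SpecialLinearGroup.coe_mul, Matrix.SpecialLinearGroup.coe_pow, map_mul, map_pow]
  refine exists_locally_trivial_cocycle (a := α) (b := β) (v := r v) hp
    (Subtype.ext ?_) (Subtype.ext ?_) (Subtype.ext ?_) ?_ ?_ (fun i => ?_) ?_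
  · change T a * T b = T b * T a
    rw [← map_mul, hab.eq, map_mul]
  · rwa [Matrix.SpecialLinearGroup.coe_pow, Matrix.SpecialLinearGroup.coe_one]
  · rwa [Matrix.SpecialLinearGroup.coe_pow, Matrix.SpecialLinearGroup.coe_one]
  · obtain ⟨m, hm⟩ := hav
    rw [hr_act α a rfl, ← sub_eq_zero, ← hr_sub, hm, hr_smul]
  · obtain ⟨m, hm⟩ := hbv
    rw [hr_act β b rfl, ← sub_eq_zero, ← hr_sub, hm, hr_smul]
  · obtain ⟨A, m, hm⟩ := hloc i
    refine ⟨r A, ?_⟩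
    rw [hr_act _ _ (hαβ i), ← sub_eq_zero, ← hr_sub, ← hr_sub, hm, hr_smul]
  · rintro ⟨W, h1, h2⟩
    obtain ⟨w, rfl⟩ := hr_surj W
    rw [hr_act α a rfl, ← sub_eq_zero, ← hr_sub] at h1
    rw [hr_act β b rfl, ← sub_eq_zero, ← hr_sub, ← hr_sub] at h2
    obtain ⟨m, hm⟩ := hr_ker _ h1
    obtain ⟨m', hm'⟩ := hr_ker _ h2
    exact hglob w m m' hm hm'

/-! ### The lattice `O³ ⊕ ℤᵐ` over the cyclotomic integers -/

section Lattice

variable {O : Type*} [CommRing O]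

/-- Multiplication by `z` on the three copies of `O`, and the identity on `N`. -/
def scalarEnd (N : Type*) [AddCommGroup N] (z : O) : Module.End ℤ (O × O × O × N) where
  toFun x := (z * x.1, z * x.2.1, z * x.2.2.1, x.2.2.2)
  map_add' x y := by simp [mul_add]
  map_smul' c x := by simp [mul_left_comm]

/-- The endomorphism `(α, β, γ, r) ↦ (α, α + z β, α + z' γ, r)`. -/
def unipotentEnd (N : Type*) [AddCommGroup N] (z z' : O) : Module.End ℤ (O × O × O × N) where
  toFun x := (x.1, x.1 + z * x.2.1, x.1 + z' * x.2.2.1, x.2.2.2)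
  map_add' x y := by
    simp only [Prod.fst_add, Prod.snd_add, Prod.mk_add_mk, Prod.mk.injEq, and_true, true_and]
    constructor <;> ring
  map_smul' c x := by simp [mul_left_comm]

variable {N : Type*} [AddCommGroup N]

lemma scalarEnd_pow_apply (z : O) (i : ℕ) (x : O × O × O × N) :
    (scalarEnd N z ^ i) x = (z ^ i * x.1, z ^ i * x.2.1, z ^ i * x.2.2.1, x.2.2.2) := by
  induction i with
  | zero => simp
  | succ i ih =>
    rw [pow_succ', Module.End.mul_apply, ih]
    simp [scalarEnd, pow_succ', mul_assoc]

lemma unipotentEnd_pow_apply (z z' : O) (i : ℕ) (x : O × O × O × N) :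
    (unipotentEnd N z z' ^ i) x =
      (x.1, (∑ k ∈ Finset.range i, z ^ k) * x.1 + z ^ i * x.2.1,
        (∑ k ∈ Finset.range i, z' ^ k) * x.1 + z' ^ i * x.2.2.1, x.2.2.2) := by
  induction i with
  | zero => simp
  | succ i ih =>
    rw [pow_succ', Module.End.mul_apply, ih]
    simp only [unipotentEnd, LinearMap.coe_mk, AddHom.coe_mk, Prod.mk.injEq, and_true, true_and,
      geom_sum_succ]
    constructor <;> ring

lemma commute_scalarEnd_unipotentEnd (z w w' : O) :
    Commute (scalarEnd N z) (unipotentEnd N w w') := by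
  refine LinearMap.ext fun x => ?_
  simp only [scalarEnd, unipotentEnd, Module.End.mul_apply, LinearMap.coe_mk, AddHom.coe_mk,
    Prod.mk.injEq, and_true, true_and]
  constructor <;> ring

lemma scalarEnd_pow_eq_one {p : ℕ} {z : O} (hz : z ^ p = 1) : scalarEnd N z ^ p = 1 := by
  refine LinearMap.ext fun x => ?_
  simp [scalarEnd_pow_apply, hz]

lemma unipotentEnd_pow_eq_one [IsDomain O] {p : ℕ} (hp : 1 < p) {z z' : O}
    (hz : IsPrimitiveRoot z p) (hz' : IsPrimitiveRoot z' p) : unipotentEnd N z z' ^ p = 1 := by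
  refine LinearMap.ext fun x => ?_
  simp [unipotentEnd_pow_apply, hz.pow_eq_one, hz'.pow_eq_one, hz.geom_sum_eq_zero hp,
    hz'.geom_sum_eq_zero hp]

/-- For a primitive `p`-th root of unity `ζ`, every `ζ ^ k - 1 ≠ 0` divides `(ζ - 1) ^ (p - 2)`. -/
lemma pow_sub_one_dvd_sub_one_pow [IsDomain O] {p k : ℕ} (hp : p.Prime) (hp2 : 3 ≤ p) {ζ : O}
    (hζ : IsPrimitiveRoot ζ p) (hk : ¬ p ∣ k) : ζ ^ k - 1 ∣ (ζ - 1) ^ (p - 2) :=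
  ((hζ.associated_sub_one_pow_sub_one_of_coprime
    ((hp.coprime_iff_not_dvd.2 hk).symm)).symm.dvd).trans (dvd_pow_self _ (by omega))

end Lattice

/-- The counterexample on a lattice `O³ ⊕ ℤᵐ`, where `O` is a ring of `p`-th cyclotomic
integers. -/
lemma exists_locally_trivial_cocycle_of_primitiveRoot {p n : ℕ} (hp : p.Prime) (hodd : p ≠ 2)
    {O : Type*} [CommRing O] [IsDomain O] {N : Type*} [AddCommGroup N]
    (B : Module.Basis (Fin n) ℤ (O × O × O × N)) {ζ : O} (hζ : IsPrimitiveRoot ζ p)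
    (hunit : ¬ IsUnit (ζ - 1)) (hassoc : Associated ((ζ - 1) ^ (p - 1)) (p : O)) :
    ∃ G : Subgroup (Matrix.SpecialLinearGroup (Fin n) ℤ),
      Finite G ∧ IsPGroup p G ∧
      ∃ Z : G → (Fin n → ZMod p),
        (∀ σ τ : G, Z (σ * τ) = Z σ +
          SLnZModAct p n (σ : Matrix.SpecialLinearGroup (Fin n) ℤ) (Z τ)) ∧
        (∀ σ : G, ∃ A : Fin n → ZMod p,
          Z σ = SLnZModAct p n (σ : Matrix.SpecialLinearGroup (Fin n) ℤ) A - A) ∧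
        ¬ ∃ W : Fin n → ZMod p, ∀ σ : G,
          Z σ = SLnZModAct p n (σ : Matrix.SpecialLinearGroup (Fin n) ℤ) W - W := by
  have hp3 : 3 ≤ p := by have := hp.two_le; omega
  have ht0 : ζ - 1 ≠ 0 := sub_ne_zero.2 (hζ.ne_one hp.one_lt)
  have hpow : (ζ - 1) ^ (p - 1) = (ζ - 1) * (ζ - 1) ^ (p - 2) := by
    rw [← pow_succ']; congr 1; omega
  have hcop : Nat.Coprime (p - 1) p := by
    rw [Nat.coprime_comm, hp.coprime_iff_not_dvd]
    exact Nat.not_dvd_of_pos_of_lt (by omega) (by omega)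
  have hζ' : IsPrimitiveRoot (ζ ^ (p - 1)) p := hζ.pow_of_coprime _ hcop
  have hinv : ζ * ζ ^ (p - 1) = 1 := by
    rw [← pow_succ', Nat.sub_add_cancel hp.one_le, hζ.pow_eq_one]
  obtain ⟨c, hc⟩ : (p : O) ∣ (ζ - 1) * (ζ - 1) ^ (p - 2) := hpow ▸ hassoc.symm.dvd
  obtain ⟨d, hd⟩ : (ζ - 1) * (ζ - 1) ^ (p - 2) ∣ (p : O) := hpow ▸ hassoc.dvd
  set s := (ζ - 1) ^ (p - 2) with hs
  have hs0 : s ≠ 0 := pow_ne_zero _ ht0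
  refine exists_locally_trivial_cocycle_of_lattice hp (hp.odd_of_ne_two hodd) B
    (a := scalarEnd N ζ) (b := unipotentEnd N ζ (ζ ^ (p - 1))) (v := (0, 0, s, 0))
    (commute_scalarEnd_unipotentEnd ..) (scalarEnd_pow_eq_one hζ.pow_eq_one)
    (unipotentEnd_pow_eq_one hp.one_lt hζ hζ') ⟨(0, 0, c, 0), ?_⟩
    ⟨(0, 0, - ζ ^ (p - 1) * c, 0), ?_⟩ (fun i => ?_) ?_
  · simp only [scalarEnd, LinearMap.coe_mk, AddHom.coe_mk, Prod.mk_sub_mk, Prod.smul_mk,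
      zsmul_eq_mul, Int.cast_natCast, smul_zero, mul_zero, sub_zero, Prod.mk.injEq, and_true,
      true_and]
    linear_combination hc
  · simp only [unipotentEnd, LinearMap.coe_mk, AddHom.coe_mk, Prod.mk_sub_mk, Prod.smul_mk,
      zsmul_eq_mul, Int.cast_natCast, smul_zero, mul_zero, sub_zero, add_zero, zero_add,
      Prod.mk.injEq, and_true, true_and]
    linear_combination - ζ ^ (p - 1) * hc + s * hinv
  · by_cases hi : p ∣ i + (p - 1)
    · have hζi : ζ ^ i = ζ := by
        have h := (hζ.pow_eq_one_iff_dvd _).2 hi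
        rw [pow_add] at h
        linear_combination ζ * h - ζ ^ i * hinv
      have h2 : ¬ p ∣ 2 := Nat.not_dvd_of_pos_of_lt (by omega) (by omega)
      obtain ⟨β, hβ⟩ := pow_sub_one_dvd_sub_one_pow hp hp3 hζ h2
      rw [← hs] at hβ
      refine ⟨(s, - ζ * β, 0, 0), (c, 0, c, 0), ?_⟩
      rw [Module.End.mul_apply, scalarEnd_pow_apply, hζi]
      simp only [unipotentEnd, LinearMap.coe_mk, AddHom.coe_mk, Prod.mk_sub_mk, Prod.smul_mk,
        zsmul_eq_mul, Int.cast_natCast, smul_zero, mul_zero, sub_zero, add_zero, Prod.mk.injEq,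
        and_true]
      refine ⟨?_, ?_, ?_⟩
      · linear_combination hc
      · linear_combination ζ * hβ
      · linear_combination hc
    · obtain ⟨γ, hγ⟩ := pow_sub_one_dvd_sub_one_pow hp hp3 hζ hi
      rw [← hs, pow_add] at hγ
      refine ⟨(0, 0, γ, 0), 0, ?_⟩
      rw [Module.End.mul_apply, scalarEnd_pow_apply]
      simp only [unipotentEnd, LinearMap.coe_mk, AddHom.coe_mk, Prod.mk_sub_mk, smul_zero,
        mul_zero, sub_zero, add_zero, zero_add, Prod.mk_eq_zero, and_true, true_and]
      linear_combination - hγ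
  · rintro ⟨w₀, w₁, w₂, w₃⟩ ⟨m₀, m₁, m₂, m₃⟩ ⟨k₀, k₁, k₂, k₃⟩ h h'
    simp only [scalarEnd, unipotentEnd, LinearMap.coe_mk, AddHom.coe_mk, Prod.mk_sub_mk,
      Prod.smul_mk, zsmul_eq_mul, Int.cast_natCast, sub_zero, Prod.mk.injEq] at h h'
    obtain ⟨-, h₁, h₂, -⟩ := h
    obtain ⟨-, h₁', h₂', -⟩ := h'
    refine hunit (IsUnit.of_mul_eq_one (d * (k₁ - m₁ - ζ ^ (p - 1) * m₂ - k₂))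
      (mul_left_cancel₀ hs0 ?_))
    linear_combination h₁ - h₁' + h₂' + ζ ^ (p - 1) * h₂ - w₂ * hinv
      - (k₁ - m₁ - ζ ^ (p - 1) * m₂ - k₂) * hd

/-- Illengo (2008): for every odd prime `p` and every `n ≥ 3(p-1)` there is a finite
`p`-subgroup `G` of `SL_n(ℤ)` and a 1-cocycle `Z : G → (ℤ/pℤ)^n` (for the action of `G`
on `(ℤ/pℤ)^n` by reduction of matrix entries modulo `p`) which satisfies the local
conditions but is not a coboundary; equivalently, the restriction map
`H¹(G, 𝔽_p^n) → ∏_C H¹(C, 𝔽_p^n)` over all cyclic subgroups `C` of `G` is not injective. -/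
theorem illengo_counterexample (p : ℕ) (hp : p.Prime) (hodd : p ≠ 2)
    (n : ℕ) (hn : 3 * (p - 1) ≤ n) :
    ∃ G : Subgroup (Matrix.SpecialLinearGroup (Fin n) ℤ),
      Finite G ∧ IsPGroup p G ∧
      ∃ Z : G → (Fin n → ZMod p),
        (∀ σ τ : G, Z (σ * τ) = Z σ + SLnZModAct p n (σ : Matrix.SpecialLinearGroup (Fin n) ℤ) (Z τ)) ∧
        (∀ σ : G, ∃ A : Fin n → ZMod p,
          Z σ = SLnZModAct p n (σ : Matrix.SpecialLinearGroup (Fin n) ℤ) A - A) ∧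
        ¬ ∃ W : Fin n → ZMod p, ∀ σ : G,
          Z σ = SLnZModAct p n (σ : Matrix.SpecialLinearGroup (Fin n) ℤ) W - W := by
  have : Fact p.Prime := ⟨hp⟩
  let K := CyclotomicField p ℚ
  have : IsCyclotomicExtension {p} ℚ K := CyclotomicField.isCyclotomicExtension p ℚ
  have hζ := IsCyclotomicExtension.zeta_spec p ℚ K
  have hrank : Module.finrank ℤ (𝓞 K) = p - 1 := by
    rw [RingOfIntegers.rank, IsCyclotomicExtension.finrank K
      (Polynomial.cyclotomic.irreducible_rat hp.pos), Nat.totient_prime hp]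
  have hdim : Module.finrank ℤ (𝓞 K × 𝓞 K × 𝓞 K × (Fin (n - 3 * (p - 1)) → ℤ)) = n := by
    simp only [Module.finrank_prod, hrank, Module.finrank_fin_fun]
    omega
  exact exists_locally_trivial_cocycle_of_primitiveRoot hp hodd
    (Module.finBasisOfFinrankEq _ _ hdim) hζ.toInteger_isPrimitiveRoot
    hζ.zeta_sub_one_prime'.not_isUnit
    (IsCyclotomicExtension.Rat.associated_zeta_sub_one_pow_prime p hζ)
end

section
/- Let x and y be positive integers such that for every positive integer n and every prime number p, p divides x^n − 1 if and only if p divides y^n − 1. Then x = y. -/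
section IdealCount

open Ideal NumberField UniqueFactorizationMonoid

variable (K : Type*) [Field K] [NumberField K]

/-- The number of ideals of norm `n` in the ring of integers of `K`. -/
noncomputable def idealCount (n : ℕ) : ℕ := Nat.card {I : Ideal (𝓞 K) // absNorm I = n}

instance finite_absNorm_eq (n : ℕ) : Finite {I : Ideal (𝓞 K) // absNorm I = n} :=
  finite_setOfPred_absNorm_eq n

theorem idealCount_zero : idealCount K 0 = 1 := by
  simp [idealCount, absNorm_eq_zero_iff]

theorem idealCount_one : idealCount K 1 = 1 := by
  simp [idealCount]

variable {K}

theorem Ideal.isCoprime_of_coprime_absNorm {I J : Ideal (𝓞 K)}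
    (h : (absNorm I).Coprime (absNorm J)) : IsCoprime I J := by
  rw [isCoprime_iff_add, Ideal.add_eq_sup, one_eq_top, ← absNorm_eq_one_iff]
  exact Nat.eq_one_of_dvd_coprimes h (absNorm_dvd_absNorm_of_le le_sup_left)
    (absNorm_dvd_absNorm_of_le le_sup_right)

theorem idealCount_mul {m n : ℕ} (h : m.Coprime n) :
    idealCount K (m * n) = idealCount K m * idealCount K n := by
  rcases Nat.eq_zero_or_pos m with rfl | hm
  · obtain rfl : n = 1 := by simpa using h
    simp [idealCount_zero, idealCount_one]
  rcases Nat.eq_zero_or_pos n with rfl | hn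
  · obtain rfl : m = 1 := by simpa using h
    simp [idealCount_zero, idealCount_one]
  rw [idealCount, idealCount, idealCount, ← Nat.card_prod]
  symm
  refine Nat.card_congr (Equiv.ofBijective
    (fun P ↦ ⟨P.1.1 * P.2.1, by rw [map_mul, P.1.2, P.2.2]⟩) ⟨?_, ?_⟩)
  · rintro ⟨⟨A, hA⟩, ⟨B, hB⟩⟩ ⟨⟨C, hC⟩, ⟨D, hD⟩⟩ he
    simp only [Subtype.mk.injEq] at he
    have hAC : A = C := by
      refine dvd_antisymm ?_ ?_
      · exact (isCoprime_of_coprime_absNorm (by rwa [hA, hD])).dvd_of_dvd_mul_right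
          (he ▸ dvd_mul_right A B)
      · exact (isCoprime_of_coprime_absNorm (by rwa [hC, hB])).dvd_of_dvd_mul_right
          (he ▸ dvd_mul_right C D)
    have hBD : B = D := by
      refine dvd_antisymm ?_ ?_
      · exact (isCoprime_of_coprime_absNorm (by rw [hB, hC]; exact h.symm)).dvd_of_dvd_mul_left
          (he ▸ dvd_mul_left B A)
      · exact (isCoprime_of_coprime_absNorm (by rw [hD, hA]; exact h.symm)).dvd_of_dvd_mul_left
          (he ▸ dvd_mul_left D C)
    subst hAC hBD
    rfl
  · rintro ⟨I, hI⟩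
    have hmem : ((m : 𝓞 K) * n) ∈ I := by
      have := absNorm_mem I
      rw [hI] at this
      exact_mod_cast this
    have hmn : span {(m : 𝓞 K)} ⊔ span {(n : 𝓞 K)} = ⊤ := by
      have := isCoprime_of_coprime_absNorm (K := K) (I := span {(m : 𝓞 K)})
        (J := span {(n : 𝓞 K)}) (by
          rw [absNorm_span_natCast, absNorm_span_natCast]
          exact Nat.Coprime.pow _ _ h)
      rwa [isCoprime_iff_add, Ideal.add_eq_sup, one_eq_top] at this
    have hprod : (I ⊔ span {(m : 𝓞 K)}) * (I ⊔ span {(n : 𝓞 K)}) = I := by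
      apply le_antisymm
      · rw [Ideal.sup_mul, Ideal.mul_sup, Ideal.mul_sup, span_singleton_mul_span_singleton]
        refine sup_le (sup_le mul_le_left mul_le_left) (sup_le mul_le_right ?_)
        rwa [span_singleton_le_iff_mem]
      · calc I = I * (span {(m : 𝓞 K)} ⊔ span {(n : 𝓞 K)}) := by rw [hmn, mul_top]
          _ = span {(m : 𝓞 K)} * I ⊔ I * span {(n : 𝓞 K)} := by
            rw [Ideal.mul_sup, mul_comm I (span {(m : 𝓞 K)})]
          _ ≤ _ := sup_le (mul_mono le_sup_right le_sup_left) (mul_mono le_sup_left le_sup_right)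
    have hN := congrArg absNorm hprod
    rw [map_mul, hI] at hN
    have h1 : (absNorm (I ⊔ span {(m : 𝓞 K)})).Coprime n := by
      have : absNorm (I ⊔ span {(m : 𝓞 K)}) ∣ m ^ Module.finrank ℤ (𝓞 K) := by
        rw [← absNorm_span_natCast]
        exact absNorm_dvd_absNorm_of_le le_sup_right
      exact (h.pow_left _).coprime_dvd_left this
    have h2 : (absNorm (I ⊔ span {(n : 𝓞 K)})).Coprime m := by
      have : absNorm (I ⊔ span {(n : 𝓞 K)}) ∣ n ^ Module.finrank ℤ (𝓞 K) := by
        rw [← absNorm_span_natCast]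
        exact absNorm_dvd_absNorm_of_le le_sup_right
      exact (h.symm.pow_left _).coprime_dvd_left this
    have h3 : absNorm (I ⊔ span {(m : 𝓞 K)}) = m :=
      Nat.dvd_antisymm (h1.dvd_of_dvd_mul_right (hN ▸ dvd_mul_right _ _))
        (h2.symm.dvd_of_dvd_mul_right (hN ▸ dvd_mul_right _ _))
    have h4 : absNorm (I ⊔ span {(n : 𝓞 K)}) = n := by
      rw [h3] at hN
      exact Nat.eq_of_mul_eq_mul_left hm hN
    exact ⟨⟨⟨_, h3⟩, ⟨_, h4⟩⟩, Subtype.ext hprod⟩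

theorem card_normalizedFactors_le {p e : ℕ} (hp : p.Prime) {I : Ideal (𝓞 K)}
    (hI : absNorm I = p ^ e) : (normalizedFactors I).card ≤ e := by
  have hI0 : I ≠ 0 := by
    rintro rfl
    exact absurd (hI.symm.trans (map_zero _)) (by simp [hp.ne_zero])
  have hdvd : p ^ (normalizedFactors I).card ∣ p ^ e := by
    rw [← hI, ← associated_iff_eq.mp (prod_normalizedFactors hI0), map_multiset_prod,
      associated_iff_eq.mp (prod_normalizedFactors hI0)]
    have key : ∀ a ∈ (normalizedFactors I).map absNorm, p ∣ a := by
      intro a ha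
      obtain ⟨P, hP, rfl⟩ := Multiset.mem_map.mp ha
      obtain ⟨k, -, hk⟩ := (Nat.dvd_prime_pow hp).mp
        (hI ▸ map_dvd absNorm (dvd_of_mem_normalizedFactors hP))
      rw [hk]
      refine dvd_pow_self p fun h0 ↦ ?_
      rw [h0, pow_zero, absNorm_eq_one_iff, ← one_eq_top] at hk
      exact (irreducible_of_normalized_factor P hP).not_isUnit (hk ▸ isUnit_one)
    simpa using Multiset.prod_dvd_prod_of_dvd (S := (normalizedFactors I).map absNorm)
      (fun _ ↦ p) id key
  exact (Nat.pow_dvd_pow_iff_le_right hp.one_lt).mp hdvd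

theorem idealCount_prime_pow_le {p : ℕ} (hp : p.Prime) (e : ℕ) :
    idealCount K (p ^ e) ≤ (e + 1) ^ Module.finrank ℤ (𝓞 K) := by
  classical
  let S := (normalizedFactors (span {(p : 𝓞 K)})).toFinset
  have hp0 : span {(p : 𝓞 K)} ≠ 0 := by
    simp [hp.ne_zero]
  have hS : S.card ≤ Module.finrank ℤ (𝓞 K) :=
    (Multiset.toFinset_card_le _).trans (card_normalizedFactors_le hp (absNorm_span_natCast p))
  have hne {I : Ideal (𝓞 K)} (hI : absNorm I = p ^ e) : I ≠ 0 := by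
    rintro rfl
    exact absurd (hI.symm.trans (map_zero _)) (by simp [hp.ne_zero])
  have hsub {I : Ideal (𝓞 K)} (hI : absNorm I = p ^ e) {P : Ideal (𝓞 K)}
      (hP : P ∈ normalizedFactors I) : P ∈ S := by
    have hPp := prime_of_normalized_factor P hP
    have h1 : P ∣ span {(p : 𝓞 K)} ^ e := by
      refine (dvd_of_mem_normalizedFactors hP).trans ?_
      rw [dvd_iff_le, span_singleton_pow, span_singleton_le_iff_mem, ← Nat.cast_pow, ← hI]
      exact absNorm_mem I
    rw [Multiset.mem_toFinset, UniqueFactorizationMonoid.mem_normalizedFactors_iff hp0]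
    exact ⟨hPp, hPp.dvd_of_dvd_pow h1⟩
  let F : {I : Ideal (𝓞 K) // absNorm I = p ^ e} → (S → Fin (e + 1)) := fun I P ↦
    ⟨(normalizedFactors I.1).count P.1, Nat.lt_succ_of_le
      ((Multiset.count_le_card _ _).trans (card_normalizedFactors_le hp I.2))⟩
  have hF : Function.Injective F := by
    rintro ⟨I, hI⟩ ⟨J, hJ⟩ h
    have hc : normalizedFactors I = normalizedFactors J := by
      ext P
      by_cases hP : P ∈ S
      · simpa [F] using congrFun h ⟨P, hP⟩
      · rw [Multiset.count_eq_zero_of_notMem fun h' ↦ hP (hsub hI h'),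
          Multiset.count_eq_zero_of_notMem fun h' ↦ hP (hsub hJ h')]
    exact Subtype.ext (associated_iff_eq.mp
      ((associated_iff_normalizedFactors_eq_normalizedFactors (hne hI) (hne hJ)).mpr hc))
  calc idealCount K (p ^ e) ≤ Nat.card (S → Fin (e + 1)) := Nat.card_le_card_of_injective F hF
    _ = (e + 1) ^ S.card := by simp
    _ ≤ _ := Nat.pow_le_pow_right (Nat.succ_pos _) hS

end IdealCount

section EulerProduct

open Filter NumberField Topology

variable (K : Type*) [Field K] [NumberField K]

/-- The `n`-th term of the Dedekind zeta function at a real argument. -/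
noncomputable def zetaTerm (s : ℝ) (n : ℕ) : ℝ := idealCount K n * (n : ℝ) ^ (-s)

theorem zetaTerm_nonneg (s : ℝ) (n : ℕ) : 0 ≤ zetaTerm K s n := by
  unfold zetaTerm; positivity

theorem dedekindZeta_ofReal {s : ℝ} (hs : 1 < s) :
    dedekindZeta K s = ((∑' n, zetaTerm K s n : ℝ) : ℂ) := by
  rw [dedekindZeta, LSeries, Complex.ofReal_tsum]
  refine tsum_congr fun n ↦ ?_
  rcases Nat.eq_zero_or_pos n with rfl | hn
  · simp [zetaTerm, Real.zero_rpow (neg_ne_zero.mpr (by linarith : s ≠ 0))]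
  · rw [LSeries.term_of_ne_zero hn.ne', zetaTerm, idealCount, Complex.ofReal_mul,
      Complex.ofReal_cpow (by positivity)]
    push_cast
    rw [Complex.cpow_neg, div_eq_mul_inv]

theorem tendsto_sub_one_mul_tsum_zetaTerm :
    Tendsto (fun s : ℝ ↦ (s - 1) * ∑' n, zetaTerm K s n) (𝓝[>] 1)
      (𝓝 (dedekindZeta_residue K)) := by
  have h := (Complex.continuous_re.tendsto _).comp (tendsto_sub_one_mul_dedekindZeta_nhdsGT K)
  refine h.congr' ?_
  filter_upwards [self_mem_nhdsWithin] with s hs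
  rw [Function.comp_apply, dedekindZeta_ofReal K hs, ← Complex.ofReal_one, ← Complex.ofReal_sub,
    ← Complex.ofReal_mul, Complex.ofReal_re]

theorem zetaTerm_prime_pow (s : ℝ) (p e : ℕ) :
    zetaTerm K s (p ^ e) = idealCount K (p ^ e) * ((p : ℝ) ^ (-s)) ^ e := by
  rw [zetaTerm, Nat.cast_pow, ← Real.rpow_natCast, ← Real.rpow_mul (by positivity),
    ← Real.rpow_natCast, ← Real.rpow_mul (by positivity), mul_comm (-s)]

theorem hasProd_zetaTerm {s : ℝ} (hs : 1 < s) (h : Summable (zetaTerm K s)) :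
    HasProd (fun p : Nat.Primes ↦ ∑' e, zetaTerm K s (p ^ e)) (∑' n, zetaTerm K s n) := by
  refine EulerProduct.eulerProduct_hasProd ?_ ?_ h.norm ?_
  · simp [zetaTerm, idealCount_one]
  · intro m n hmn
    rw [zetaTerm, zetaTerm, zetaTerm, idealCount_mul hmn, Nat.cast_mul, Nat.cast_mul,
      Real.mul_rpow (by positivity) (by positivity)]
    ring
  · simp [zetaTerm, Real.zero_rpow (neg_ne_zero.mpr (by linarith : s ≠ 0))]

/-- The logarithm of each Euler factor is its linear term, up to a summable error. -/
theorem exists_abs_log_eulerFactor_sub_le : ∃ C : ℝ, ∀ s : ℝ, 1 < s → Summable (zetaTerm K s) →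
    ∀ p : Nat.Primes, 1 ≤ ∑' e, zetaTerm K s (p ^ e) ∧
      |Real.log (∑' e, zetaTerm K s (p ^ e)) - idealCount K p * (p : ℝ) ^ (-s)| ≤
        C * (p : ℝ) ^ (-2 : ℝ) := by
  set d := Module.finrank ℤ (𝓞 K)
  have hsum : Summable fun e : ℕ ↦ ((e + 2 : ℕ) + 1 : ℝ) ^ d * (1 / 2) ^ e := by
    have h := summable_pow_mul_geometric_of_norm_lt_one d
      (show ‖(1 / 2 : ℝ)‖ < 1 by norm_num)
    have h3 := ((summable_nat_add_iff 3).mpr h).mul_left 8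
    refine h3.congr fun e ↦ ?_
    push_cast
    ring
  set A := ∑' e : ℕ, ((e + 2 : ℕ) + 1 : ℝ) ^ d * (1 / 2) ^ e
  refine ⟨A + 4 ^ d, fun s hs hZ p ↦ ?_⟩
  have hp2 : (2 : ℝ) ≤ p := by exact_mod_cast p.2.two_le
  set t : ℝ := (p : ℝ) ^ (-s) with ht
  have ht0 : 0 ≤ t := by positivity
  have htp : t ≤ (p : ℝ) ^ (-1 : ℝ) :=
    Real.rpow_le_rpow_of_exponent_le (by linarith) (by linarith)
  have hthalf : t ≤ 1 / 2 := by
    refine htp.trans ?_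
    rw [Real.rpow_neg_one, one_div]
    exact inv_anti₀ (by norm_num) hp2
  have htsq : t ^ 2 ≤ (p : ℝ) ^ (-2 : ℝ) := by
    calc t ^ 2 ≤ ((p : ℝ) ^ (-1 : ℝ)) ^ 2 := pow_le_pow_left₀ ht0 htp 2
      _ = _ := by rw [← Real.rpow_natCast, ← Real.rpow_mul (by positivity)]; norm_num
  have hcount (e : ℕ) : (idealCount K (p ^ e) : ℝ) ≤ ((e : ℝ) + 1) ^ d := by
    exact_mod_cast idealCount_prime_pow_le p.2 e
  have hS : Summable fun e ↦ zetaTerm K s (p ^ e) :=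
    hZ.comp_injective (Nat.pow_right_injective p.2.two_le)
  set u : ℝ := idealCount K p * t with hu
  have hu0 : 0 ≤ u := by positivity
  have hut : u ≤ 2 ^ d * t := by
    have := hcount 1
    rw [pow_one] at this
    refine mul_le_mul_of_nonneg_right (this.trans_eq ?_) ht0
    norm_num
  have hsplit : ∑' e, zetaTerm K s (p ^ e) = 1 + u + ∑' e, zetaTerm K s (p ^ (e + 2)) := by
    rw [← hS.sum_add_tsum_nat_add 2]
    simp [Finset.sum_range_succ, zetaTerm, idealCount_one, hu, ht]
  have htail0 : 0 ≤ ∑' e, zetaTerm K s (p ^ (e + 2)) := tsum_nonneg fun e ↦ zetaTerm_nonneg K s _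
  have htail : ∑' e, zetaTerm K s (p ^ (e + 2)) ≤ A * t ^ 2 := by
    rw [← tsum_mul_right]
    refine Summable.tsum_le_tsum (fun e ↦ ?_) ((summable_nat_add_iff 2).mpr hS)
      (hsum.mul_right _)
    rw [zetaTerm_prime_pow, ← ht, pow_add t e 2, ← mul_assoc]
    refine mul_le_mul_of_nonneg_right ?_ (by positivity)
    exact mul_le_mul (hcount _) (pow_le_pow_left₀ ht0 hthalf e) (by positivity) (by positivity)
  set T := ∑' e, zetaTerm K s (p ^ (e + 2))
  have hA0 : 0 ≤ A := tsum_nonneg fun e ↦ by positivity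
  rw [hsplit]
  refine ⟨by linarith, ?_⟩
  have hupper : Real.log (1 + u + T) ≤ u + T := by
    have := Real.log_le_sub_one_of_pos (show 0 < 1 + u + T by positivity)
    linarith
  have hlower : u - u ^ 2 ≤ Real.log (1 + u + T) := by
    calc u - u ^ 2 ≤ 2 * u / (u + 2) := by
          rw [le_div_iff₀ (by positivity)]
          nlinarith [pow_nonneg hu0 3, pow_nonneg hu0 2]
      _ ≤ Real.log (1 + u) := Real.le_log_one_add_of_nonneg hu0
      _ ≤ _ := Real.log_le_log (by positivity) (by linarith)
  have husq : u ^ 2 ≤ 4 ^ d * t ^ 2 := by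
    calc u ^ 2 ≤ (2 ^ d * t) ^ 2 := pow_le_pow_left₀ hu0 hut 2
      _ = _ := by rw [mul_pow, ← pow_mul, mul_comm d 2, pow_mul]; norm_num
  have h4 : (0 : ℝ) ≤ 4 ^ d := by positivity
  have e1 : A * t ^ 2 ≤ A * (p : ℝ) ^ (-2 : ℝ) := mul_le_mul_of_nonneg_left htsq hA0
  have e2 : 4 ^ d * t ^ 2 ≤ 4 ^ d * (p : ℝ) ^ (-2 : ℝ) := mul_le_mul_of_nonneg_left htsq h4
  have e3 : 0 ≤ A * (p : ℝ) ^ (-2 : ℝ) := by positivity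
  have e4 : 0 ≤ 4 ^ d * (p : ℝ) ^ (-2 : ℝ) := by positivity
  rw [abs_le]
  constructor <;> linarith

end EulerProduct

section Density

open Filter Topology

/-- A weight `g` on the primes has logarithmic mass `c` if `∑ g(p) p⁻ˢ` differs from
`c * log (1 / (s - 1))` by a bounded amount as `s → 1⁺`. -/
def HasMass (g : Nat.Primes → ℝ) (c : ℝ) : Prop :=
  ∃ C : ℝ, ∀ᶠ s : ℝ in 𝓝[>] 1, Summable (fun p ↦ g p * (p : ℝ) ^ (-s)) ∧
    |∑' p, g p * (p : ℝ) ^ (-s) - c * -Real.log (s - 1)| ≤ C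

theorem HasMass.add {g g' : Nat.Primes → ℝ} {c c' : ℝ} (h : HasMass g c) (h' : HasMass g' c') :
    HasMass (fun p ↦ g p + g' p) (c + c') := by
  obtain ⟨C, hC⟩ := h
  obtain ⟨C', hC'⟩ := h'
  refine ⟨C + C', ?_⟩
  filter_upwards [hC, hC'] with s ⟨h1, h2⟩ ⟨h3, h4⟩
  simp only [add_mul]
  refine ⟨h1.add h3, ?_⟩
  rw [h1.tsum_add h3, add_sub_add_comm]
  exact (abs_add_le _ _).trans (add_le_add h2 h4)

theorem HasMass.const_mul {g : Nat.Primes → ℝ} {c : ℝ} (h : HasMass g c) (a : ℝ) :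
    HasMass (fun p ↦ a * g p) (a * c) := by
  obtain ⟨C, hC⟩ := h
  refine ⟨|a| * C, ?_⟩
  filter_upwards [hC] with s ⟨h1, h2⟩
  simp only [mul_assoc]
  refine ⟨h1.mul_left a, ?_⟩
  rw [tsum_mul_left, ← mul_sub, abs_mul]
  exact mul_le_mul_of_nonneg_left h2 (abs_nonneg a)

theorem hasMass_zero_of_finite {g : Nat.Primes → ℝ} (h : g.support.Finite) : HasMass g 0 := by
  refine ⟨∑ p ∈ h.toFinset, |g p|, ?_⟩
  filter_upwards [self_mem_nhdsWithin] with s (hs : 1 < s)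
  have h0 : ∀ p ∉ h.toFinset, g p * (p : ℝ) ^ (-s) = 0 := by
    intro p hp
    have : g p = 0 := by simpa using hp
    rw [this, zero_mul]
  refine ⟨summable_of_ne_finset_zero h0, ?_⟩
  rw [tsum_eq_sum h0, zero_mul, sub_zero]
  refine (Finset.abs_sum_le_sum_abs _ _).trans (Finset.sum_le_sum fun p _ ↦ ?_)
  rw [abs_mul, abs_of_nonneg (by positivity : (0 : ℝ) ≤ (p : ℝ) ^ (-s))]
  exact mul_le_of_le_one_right (abs_nonneg _)
    (Real.rpow_le_one_of_one_le_of_nonpos (by exact_mod_cast p.2.one_le) (by linarith))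

theorem HasMass.sum {ι : Type*} (s : Finset ι) {g : ι → Nat.Primes → ℝ} {c : ι → ℝ}
    (h : ∀ i ∈ s, HasMass (g i) (c i)) : HasMass (fun p ↦ ∑ i ∈ s, g i p) (∑ i ∈ s, c i) := by
  classical
  induction s using Finset.induction_on with
  | empty => simpa using hasMass_zero_of_finite (g := fun _ ↦ 0) (by simp)
  | insert i s hi ih =>
    simp only [Finset.sum_insert hi]
    exact (h i (Finset.mem_insert_self i s)).add
      (ih fun j hj ↦ h j (Finset.mem_insert_of_mem hj))

theorem HasMass.congr {g g' : Nat.Primes → ℝ} {c : ℝ} (h : HasMass g c)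
    (hg : {p | g p ≠ g' p}.Finite) : HasMass g' c := by
  have h0 : HasMass (fun p ↦ g' p - g p) 0 := by
    refine hasMass_zero_of_finite (hg.subset fun p hp ↦ ?_)
    rw [Function.mem_support, sub_ne_zero] at hp
    exact hp.symm
  simpa using h.add h0

theorem tendsto_neg_log_sub_one : Tendsto (fun s : ℝ ↦ -Real.log (s - 1)) (𝓝[>] 1) atTop := by
  refine tendsto_neg_atBot_atTop.comp (Real.tendsto_log_nhdsGT_zero.comp ?_)
  refine tendsto_nhdsWithin_iff.mpr ⟨?_, ?_⟩
  · have : Tendsto (fun s : ℝ ↦ s - 1) (𝓝 1) (𝓝 (1 - 1)) := tendsto_id.sub_const 1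
    rw [sub_self] at this
    exact this.mono_left nhdsWithin_le_nhds
  · filter_upwards [self_mem_nhdsWithin] with s (hs : 1 < s)
    exact sub_pos.mpr hs

theorem HasMass.unique {g : Nat.Primes → ℝ} {c c' : ℝ} (h : HasMass g c) (h' : HasMass g c') :
    c = c' := by
  obtain ⟨C, hC⟩ := h
  obtain ⟨C', hC'⟩ := h'
  by_contra hne
  have hpos : 0 < |c - c'| := abs_pos.mpr (sub_ne_zero.mpr hne)
  obtain ⟨s, ⟨⟨-, h1⟩, ⟨-, h2⟩⟩, h3⟩ := ((hC.and hC').and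
    (tendsto_neg_log_sub_one.eventually_gt_atTop (max 0 ((C + C') / |c - c'|)))).exists
  set L := -Real.log (s - 1)
  have hL : 0 < L := (le_max_left _ _).trans_lt h3
  have h4 : (C + C') < L * |c - c'| := (div_lt_iff₀ hpos).mp ((le_max_right _ _).trans_lt h3)
  have h5 : |c - c'| * L ≤ C + C' := by
    set x := ∑' p : Nat.Primes, g p * (p : ℝ) ^ (-s)
    calc |c - c'| * L = |(x - c' * L) - (x - c * L)| := by
          rw [sub_sub_sub_cancel_left, ← sub_mul, abs_mul, abs_of_pos hL]
      _ ≤ |x - c' * L| + |x - c * L| := abs_sub _ _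
      _ ≤ C + C' := by linarith
  linarith

open NumberField in
/-- The weight counting prime ideals of degree one has logarithmic mass `1`. -/
theorem hasMass_idealCount (K : Type*) [Field K] [NumberField K] :
    HasMass (fun p ↦ idealCount K p) 1 := by
  obtain ⟨C, hC⟩ := exists_abs_log_eulerFactor_sub_le K
  have hres := dedekindZeta_residue_pos K
  have hlim := tendsto_sub_one_mul_tsum_zetaTerm K
  have hlog := hlim.log hres.ne'
  refine ⟨C * ∑' p : Nat.Primes, (p : ℝ) ^ (-2 : ℝ) +
    (|Real.log (dedekindZeta_residue K)| + 1), ?_⟩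
  filter_upwards [self_mem_nhdsWithin, hlim.eventually_const_lt hres,
    hlog.abs.eventually_lt_const (lt_add_one _)] with s (hs : 1 < s) hpos hbd
  have hs0 : 0 < s - 1 := sub_pos.mpr hs
  have hZ : 0 < ∑' n, zetaTerm K s n := pos_of_mul_pos_right hpos hs0.le
  have hsum : Summable (zetaTerm K s) := by
    by_contra hns
    rw [tsum_eq_zero_of_not_summable hns] at hZ
    exact lt_irrefl _ hZ
  have hF := hC s hs hsum
  have hlogsum : HasSum (fun p : Nat.Primes ↦ Real.log (∑' e, zetaTerm K s (p ^ e)))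
      (Real.log (∑' n, zetaTerm K s n)) := by
    have := ((Real.continuousAt_log hZ.ne').tendsto).comp (hasProd_zetaTerm K hs hsum)
    refine this.congr fun S ↦ ?_
    rw [Function.comp_apply, Real.log_prod fun p _ ↦ (zero_lt_one.trans_le (hF p).1).ne']
  have hsq : Summable fun p : Nat.Primes ↦ C * (p : ℝ) ^ (-2 : ℝ) :=
    (Nat.Primes.summable_rpow.mpr (by norm_num)).mul_left C
  have hdiff : Summable fun p : Nat.Primes ↦
      Real.log (∑' e, zetaTerm K s (p ^ e)) - idealCount K p * (p : ℝ) ^ (-s) :=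
    Summable.of_norm_bounded hsq fun p ↦ (hF p).2
  have hmain : Summable fun p : Nat.Primes ↦ (idealCount K p : ℝ) * (p : ℝ) ^ (-s) := by
    simpa using hlogsum.summable.sub hdiff
  refine ⟨hmain, ?_⟩
  have h1 : |Real.log (∑' n, zetaTerm K s n) - ∑' p : Nat.Primes,
      (idealCount K p : ℝ) * (p : ℝ) ^ (-s)| ≤ C * ∑' p : Nat.Primes, (p : ℝ) ^ (-2 : ℝ) := by
    rw [← hlogsum.tsum_eq, ← hlogsum.summable.tsum_sub hmain, ← tsum_mul_left]
    exact tsum_of_norm_bounded (f := fun p : Nat.Primes ↦ Real.log (∑' e, zetaTerm K s (p ^ e)) -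
      idealCount K p * (p : ℝ) ^ (-s)) hsq.hasSum fun p ↦ (hF p).2
  rw [Real.log_mul hs0.ne' hZ.ne'] at hbd
  rw [abs_le] at h1 ⊢
  rw [abs_lt] at hbd
  constructor <;> linarith

end Density

section RootCount

open Ideal NumberField Polynomial UniqueFactorizationMonoid

/-- An algebraic integer generating a number field has nonzero exponent. -/
theorem RingOfIntegers.exponent_ne_zero {K : Type*} [Field K] [NumberField K] {θ : 𝓞 K}
    (B : PowerBasis ℚ K) (hB : B.gen = θ) : RingOfIntegers.exponent θ ≠ 0 := by
  have hgen : IsIntegral ℤ B.gen := hB ▸ θ.isIntegral_coe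
  obtain ⟨d, hd⟩ : ∃ d : ℤ, (d : ℚ) = Algebra.discr ℚ B.basis := by
    refine IsIntegrallyClosed.isIntegral_iff.mp (Algebra.discr_isIntegral ℚ fun i ↦ ?_)
    rw [B.basis_eq_pow]
    exact hgen.pow i
  have hd0 : d ≠ 0 := by
    rintro rfl
    exact Algebra.discr_not_zero_of_basis ℚ B.basis (by simpa using hd.symm)
  have hmem : d ∈ under ℤ (conductor ℤ θ) := by
    rw [under_def, Ideal.mem_comap, mem_conductor_iff]
    intro b
    have h := Algebra.discr_mul_isIntegral_mem_adjoin (R := ℤ) ℚ hgen b.isIntegral_coe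
    have hmap : Algebra.adjoin ℤ {B.gen} =
        (Algebra.adjoin ℤ {θ}).map (IsScalarTower.toAlgHom ℤ (𝓞 K) K) := by
      rw [AlgHom.map_adjoin, Set.image_singleton, hB]
      rfl
    rw [hmap, ← hd] at h
    obtain ⟨z, hz, hzb⟩ := h
    have hz' : algebraMap ℤ (𝓞 K) d * b = z := by
      apply RingOfIntegers.coe_injective
      rw [Algebra.smul_def] at hzb
      simpa using hzb.symm
    rw [hz']
    exact hz
  rw [RingOfIntegers.exponent, ne_eq, absNorm_eq_zero_iff]
  intro hbot
  rw [hbot, Ideal.mem_bot] at hmem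
  exact hd0 hmem

/-- The number of roots of an integer polynomial modulo `p`. -/
noncomputable def rootCount (f : ℤ[X]) (p : ℕ) : ℕ := Nat.card {r : ZMod p // aeval r f = 0}

theorem idealCount_eq_rootCount {K : Type*} [Field K] [NumberField K] {θ : 𝓞 K} {p : ℕ}
    [Fact p.Prime] (hp : ¬ p ∣ RingOfIntegers.exponent θ) :
    idealCount K p = rootCount (minpoly ℤ θ) p := by
  have hprime : p.Prime := Fact.out
  set g := (minpoly ℤ θ).map (Int.castRingHom (ZMod p)) with hg
  have hg0 : g ≠ 0 := map_monic_ne_zero (minpoly.monic θ.isIntegral)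
  let e := Ideal.primesOverSpanEquivMonicFactorsMod hp
  have e₁ : {I : Ideal (𝓞 K) // absNorm I = p} ≃
      {P : primesOver (span {(p : ℤ)}) (𝓞 K) // absNorm P.1 = p} := by
    refine (Equiv.subtypeSubtypeEquivSubtype (q := fun I : Ideal (𝓞 K) ↦ absNorm I = p)
      fun {I} hI ↦ ?_).symm
    have hI' : I.IsPrime := isPrime_of_irreducible_absNorm (by rw [hI]; exact hprime)
    refine ⟨hI', ⟨?_⟩⟩
    have hmax := Int.ideal_span_isMaximal_of_prime p
    refine hmax.eq_of_le (IsPrime.under ℤ I).ne_top ?_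
    rw [span_singleton_le_iff_mem, under_def, Ideal.mem_comap]
    simpa [hI] using absNorm_mem I
  have e₂ : {P : primesOver (span {(p : ℤ)}) (𝓞 K) // absNorm P.1 = p} ≃
      {Q : RingOfIntegers.monicFactorsMod θ p // natDegree Q.1 = 1} := by
    refine Equiv.subtypeEquiv e fun P ↦ ?_
    obtain ⟨Q, rfl⟩ := e.symm.surjective P
    rw [Equiv.apply_symm_apply,
      ← Ideal.inertiaDeg_primesOverSpanEquivMonicFactorsMod_symm_apply' hp Q.2]
    have := (e.symm Q).2.1
    have := (e.symm Q).2.2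
    rw [← absNorm_pow_inertiaDeg (span {(p : ℤ)}) (e.symm Q).1, absNorm_span_natCast,
      Module.finrank_self, pow_one]
    exact Nat.pow_eq_self_iff hprime.one_lt
  have e₃ : {Q : RingOfIntegers.monicFactorsMod θ p // natDegree Q.1 = 1} ≃
      {r : ZMod p // aeval r (minpoly ℤ θ) = 0} := by
    have hroot (r : ZMod p) : aeval r (minpoly ℤ θ) = 0 ↔ X - C r ∣ g := by
      rw [dvd_iff_isRoot, IsRoot.def, hg, eval_map, aeval_def, algebraMap_int_eq]
    have hmem (r : {r : ZMod p // aeval r (minpoly ℤ θ) = 0}) :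
        X - C r.1 ∈ RingOfIntegers.monicFactorsMod θ p := by
      rw [Multiset.mem_toFinset, Polynomial.mem_normalizedFactors_iff hg0]
      exact ⟨irreducible_X_sub_C _, monic_X_sub_C _, (hroot _).mp r.2⟩
    refine (Equiv.ofBijective (fun r ↦ ⟨⟨X - C r.1, hmem r⟩, natDegree_X_sub_C _⟩) ⟨?_, ?_⟩).symm
    · intro r s hrs
      simpa [Subtype.ext_iff] using hrs
    · rintro ⟨⟨Q, hQ⟩, hQ1⟩
      rw [Multiset.mem_toFinset, Polynomial.mem_normalizedFactors_iff hg0] at hQ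
      have hQX : Q = X - C (-Q.coeff 0) := by
        rw [map_neg, sub_neg_eq_add]
        exact hQ.2.1.eq_X_add_C hQ1
      refine ⟨⟨-Q.coeff 0, (hroot _).mpr (hQX ▸ hQ.2.2)⟩, ?_⟩
      simp only [Subtype.mk.injEq]
      exact hQX.symm
  exact Nat.card_congr ((e₁.trans e₂).trans e₃)

/-- The number of roots modulo `p` of a monic irreducible integer polynomial has logarithmic
mass `1`. -/
theorem hasMass_rootCount {f : ℤ[X]} (hf : f.Monic) (hirr : Irreducible f) :
    HasMass (fun p ↦ rootCount f p) 1 := by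
  have hirrQ : Irreducible (f.map (Int.castRingHom ℚ)) :=
    (hf.irreducible_iff_irreducible_map_fraction_map (K := ℚ)).mp hirr
  have : Fact (Irreducible (f.map (Int.castRingHom ℚ))) := ⟨hirrQ⟩
  let B := AdjoinRoot.powerBasis hirrQ.ne_zero
  have : NumberField (AdjoinRoot (f.map (Int.castRingHom ℚ))) :=
    { to_charZero := charZero_of_injective_algebraMap (algebraMap ℚ _).injective
      to_finiteDimensional := B.finite }
  have hroot : aeval B.gen f = 0 := by
    rw [← aeval_map_algebraMap ℚ]
    exact AdjoinRoot.aeval_eq _ |>.trans AdjoinRoot.mk_self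
  let θ : 𝓞 (AdjoinRoot (f.map (Int.castRingHom ℚ))) := ⟨B.gen, f, hf, hroot⟩
  have hmin : minpoly ℤ θ = f := by
    have hθ : IsIntegral ℤ θ := θ.isIntegral
    have hθ0 : aeval θ f = 0 := by
      apply RingOfIntegers.coe_injective
      rw [← aeval_algebraMap_apply, map_zero]
      exact hroot
    exact eq_of_monic_of_associated (minpoly.monic hθ) hf
      ((minpoly.irreducible hθ).associated_of_dvd hirr (minpoly.isIntegrallyClosed_dvd hθ hθ0))
  have hexp := RingOfIntegers.exponent_ne_zero (θ := θ) B rfl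
  refine (hasMass_idealCount (AdjoinRoot (f.map (Int.castRingHom ℚ)))).congr ?_
  refine ((RingOfIntegers.exponent θ).primeFactors.finite_toSet.preimage
    Nat.Primes.coe_nat_injective.injOn).subset fun p hp ↦ ?_
  by_contra hnd
  have : Fact p.1.Prime := ⟨p.2⟩
  apply hp
  rw [idealCount_eq_rootCount (θ := θ), hmin]
  intro hdvd
  exact hnd (Nat.mem_primeFactors.mpr ⟨p.2, hdvd, hexp⟩)

end RootCount

section PowerRoots

open Polynomial

/-- The number of `q`-th roots of `w` modulo `p`. -/
noncomputable def powRootCount (q w p : ℕ) : ℕ := {t : ZMod p | t ^ q = w}.ncard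

theorem irreducible_X_pow_sub_natCast {q w : ℕ} (hq : q.Prime) (hw : ∀ z : ℕ, z ^ q ≠ w) :
    Irreducible (X ^ q - C (w : ℤ)) := by
  rw [(monic_X_pow_sub_C _ hq.ne_zero).irreducible_iff_irreducible_map_fraction_map (K := ℚ)]
  simp only [Polynomial.map_sub, Polynomial.map_pow, map_X, map_C]
  refine X_pow_sub_C_irreducible_of_prime hq fun b hb ↦ ?_
  have hb' : IsIntegral ℤ b := by
    refine IsIntegral.of_pow hq.pos ?_
    rw [hb]
    exact isIntegral_algebraMap
  obtain ⟨z, rfl⟩ := IsIntegrallyClosed.isIntegral_iff.mp hb'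
  apply hw z.natAbs
  rw [← Int.natAbs_pow, ← Int.natAbs_natCast w]
  congr 1
  exact_mod_cast hb

theorem hasMass_powRootCount {q w : ℕ} (hq : q.Prime) (hw : ∀ z : ℕ, z ^ q ≠ w) :
    HasMass (fun p ↦ powRootCount q w p) 1 := by
  have h := hasMass_rootCount (monic_X_pow_sub_C (w : ℤ) hq.ne_zero)
    (irreducible_X_pow_sub_natCast hq hw)
  convert h using 4 with p
  rw [powRootCount, rootCount, ← Nat.card_coe_set_eq]
  simp only [Set.coe_ofPred, map_sub, map_pow, aeval_X, sub_eq_zero, map_natCast]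

theorem hasMass_powRootCount_one {q : ℕ} (hq : q.Prime) :
    HasMass (fun p ↦ powRootCount q 1 p) 2 := by
  have h1 : HasMass (fun _ ↦ 1) 1 := by
    simpa [rootCount] using hasMass_rootCount monic_X irreducible_X
  have h2 := h1.add (hasMass_rootCount (cyclotomic.monic q ℤ) (cyclotomic.irreducible hq.pos))
  rw [one_add_one_eq_two] at h2
  refine h2.congr ((Set.finite_singleton (⟨q, hq⟩ : Nat.Primes)).subset fun p hp ↦ ?_)
  by_contra hpq
  apply hp
  have : Fact p.1.Prime := ⟨p.2⟩
  have : Fact q.Prime := ⟨hq⟩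
  have hcyc (t : ZMod p) : aeval t (cyclotomic q ℤ) = ∑ i ∈ Finset.range q, t ^ i := by
    simp [cyclotomic_prime]
  have hset : {t : ZMod p | t ^ q = (1 : ℕ)} =
      insert 1 {t : ZMod p | aeval t (cyclotomic q ℤ) = 0} := by
    ext t
    simp only [Set.mem_ofPred_eq, Set.mem_insert_iff, hcyc]
    rw [Nat.cast_one, ← sub_eq_zero, ← geom_sum_mul, mul_eq_zero, sub_eq_zero, or_comm]
  have hone : (1 : ZMod p) ∉ {t : ZMod p | aeval t (cyclotomic q ℤ) = 0} := by
    simp only [Set.mem_ofPred_eq, hcyc, one_pow, Finset.sum_const, Finset.card_range, nsmul_one]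
    rw [ZMod.natCast_eq_zero_iff, Nat.prime_dvd_prime_iff_eq p.2 hq]
    exact fun h ↦ hpq (Subtype.ext h)
  rw [powRootCount, hset, Set.ncard_insert_of_notMem hone, rootCount, ← Nat.card_coe_set_eq,
    Nat.cast_add, Nat.cast_one, add_comm]
  rfl

theorem powRootCount_of_pow_eq {p : ℕ} [Fact p.Prime] {q w : ℕ} {s : (ZMod p)ˣ}
    (hs : (s : ZMod p) ^ q = w) : powRootCount q w p = powRootCount q 1 p := by
  rw [powRootCount, powRootCount, ← Nat.card_coe_set_eq, ← Nat.card_coe_set_eq]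
  refine Nat.card_congr (Equiv.subtypeEquiv s⁻¹.mulRight fun t ↦ ?_)
  simp only [Set.mem_ofPred_eq, Units.mulRight_apply, mul_pow, Nat.cast_one]
  rw [← hs, ← Units.val_pow_eq_pow_val, ← Units.val_pow_eq_pow_val, inv_pow,
    Units.mul_inv_eq_one]

theorem powRootCount_eq_zero {p : ℕ} [Fact p.Prime] {q w : ℕ} (hq : q ≠ 0) {u : (ZMod p)ˣ}
    (hu : (u : ZMod p) = w) (h : ¬ ∃ s : (ZMod p)ˣ, s ^ q = u) : powRootCount q w p = 0 := by
  rw [powRootCount, Set.ncard_eq_zero]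
  refine Set.eq_empty_of_forall_notMem fun t (ht : t ^ q = w) ↦ h ?_
  have ht0 : t ≠ 0 := by
    rintro rfl
    rw [zero_pow hq, ← hu] at ht
    exact u.ne_zero ht.symm
  refine ⟨Units.mk0 t ht0, Units.ext ?_⟩
  simpa [hu] using ht

theorem exists_pow_eq_generator_pow_iff {G : Type*} [Group G] [Finite G] {γ : G}
    (hγ : ∀ g, g ∈ Submonoid.powers γ) {q : ℕ} (hq : q ∣ Nat.card G) (k : ℕ) :
    (∃ s, s ^ q = γ ^ k) ↔ q ∣ k := by
  constructor
  · rintro ⟨s, hs⟩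
    obtain ⟨m, rfl⟩ := hγ s
    rw [← pow_mul, pow_eq_pow_iff_modEq, orderOf_eq_card_of_forall_mem_powers hγ] at hs
    exact (hs.of_dvd hq).dvd_iff dvd_rfl |>.mp (dvd_mul_left q m)
  · rintro ⟨m, rfl⟩
    exact ⟨γ ^ m, by rw [← pow_mul, mul_comm]⟩

theorem existsUnique_dvd_add_mul {q : ℕ} (hq : q.Prime) (i : ℕ) {j : ℕ} (hj : ¬ q ∣ j) :
    ∃ c < q, ∀ d < q, q ∣ i + d * j ↔ d = c := by
  have : Fact q.Prime := ⟨hq⟩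
  have hj0 : (j : ZMod q) ≠ 0 := by rwa [ne_eq, ZMod.natCast_eq_zero_iff]
  refine ⟨(-i / j : ZMod q).val, ZMod.val_lt _, fun d hd ↦ ?_⟩
  rw [← ZMod.natCast_eq_zero_iff]
  push_cast
  rw [add_comm, ← eq_neg_iff_add_eq_zero, ← eq_div_iff hj0]
  constructor
  · intro h
    rw [← h, ZMod.val_cast_of_lt hd]
  · rintro rfl
    rw [ZMod.natCast_zmod_val]

/-- If `x` and `y` have the same order modulo `p`, then counting `q`-th roots of the
products `x * y ^ c` detects only whether `x` is a `q`-th power modulo `p`. -/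
theorem sum_powRootCount_mul_pow {p q x y : ℕ} [Fact p.Prime] (hq : q.Prime)
    (hx : (x : ZMod p) ≠ 0) (hy : (y : ZMod p) ≠ 0)
    (h : ∀ n : ℕ, 0 < n → ((x : ZMod p) ^ n = 1 ↔ (y : ZMod p) ^ n = 1)) :
    (q - 1) * powRootCount q x p + powRootCount q 1 p =
      ∑ c ∈ Finset.range q, powRootCount q (x * y ^ c) p := by
  obtain ⟨γ, hγ⟩ := IsCyclic.exists_monoid_generator (α := (ZMod p)ˣ)
  obtain ⟨i, hi⟩ := hγ (Units.mk0 _ hx)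
  obtain ⟨j, hj⟩ := hγ (Units.mk0 _ hy)
  have hxi : ((γ ^ i : (ZMod p)ˣ) : ZMod p) = x := congrArg Units.val hi
  have hyj : ((γ ^ j : (ZMod p)ˣ) : ZMod p) = y := congrArg Units.val hj
  have hxy (c : ℕ) : ((γ ^ (i + c * j) : (ZMod p)ˣ) : ZMod p) = (x * y ^ c : ℕ) := by
    rw [pow_add, mul_comm c, pow_mul, Units.val_mul, Units.val_pow_eq_pow_val (γ ^ j), hxi, hyj]
    push_cast
    rfl
  have hpow {k w : ℕ} (hk : ((γ ^ k : (ZMod p)ˣ) : ZMod p) = w)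
      (hs : ∃ s : (ZMod p)ˣ, s ^ q = γ ^ k) : powRootCount q w p = powRootCount q 1 p := by
    obtain ⟨s, hs⟩ := hs
    exact powRootCount_of_pow_eq (s := s) (by rw [← hk, ← hs, Units.val_pow_eq_pow_val])
  have hall (hs : ∀ k, (k = i ∨ ∃ c, k = i + c * j) → ∃ s : (ZMod p)ˣ, s ^ q = γ ^ k) :
      (q - 1) * powRootCount q x p + powRootCount q 1 p =
        ∑ c ∈ Finset.range q, powRootCount q (x * y ^ c) p := by
    rw [hpow hxi (hs i (.inl rfl)),
      Finset.sum_congr rfl fun c _ ↦ hpow (hxy c) (hs _ (.inr ⟨c, rfl⟩)), Finset.sum_const,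
      Finset.card_range, smul_eq_mul, ← Nat.succ_mul, Nat.succ_eq_add_one,
      Nat.sub_add_cancel hq.one_le]
  by_cases hqp : q ∣ Nat.card (ZMod p)ˣ
  · have hiff := exists_pow_eq_generator_pow_iff hγ hqp
    have hij : q ∣ i ↔ q ∣ j := by
      obtain ⟨n, hn⟩ := hqp
      have hn0 : 0 < n := by
        have := Nat.card_pos (α := (ZMod p)ˣ)
        rw [hn] at this
        exact Nat.pos_of_mul_pos_left this
      have key (k : ℕ) : ((γ ^ k : (ZMod p)ˣ) : ZMod p) ^ n = 1 ↔ q ∣ k := by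
        rw [← Units.val_pow_eq_pow_val, Units.val_eq_one, ← pow_mul, ← orderOf_dvd_iff_pow_eq_one,
          orderOf_eq_card_of_forall_mem_powers hγ, hn, Nat.mul_dvd_mul_iff_right hn0]
      rw [← key i, ← key j, hxi, hyj]
      exact h n hn0
    by_cases hqi : q ∣ i
    · refine hall fun k hk ↦ (hiff k).mpr ?_
      rcases hk with rfl | ⟨c, rfl⟩
      · exact hqi
      · exact dvd_add hqi ((hij.mp hqi).mul_left c)
    · obtain ⟨c, hc, huniq⟩ := existsUnique_dvd_add_mul hq i (mt hij.mpr hqi)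
      have hzero {k w : ℕ} (hk : ((γ ^ k : (ZMod p)ˣ) : ZMod p) = w) (hqk : ¬ q ∣ k) :
          powRootCount q w p = 0 := powRootCount_eq_zero hq.ne_zero hk (mt (hiff k).mp hqk)
      rw [hzero hxi hqi, mul_zero, zero_add, Finset.sum_eq_single c]
      · exact (hpow (hxy c) ((hiff _).mpr ((huniq c hc).mpr rfl))).symm
      · intro d hd hdc
        exact hzero (hxy d) (mt (huniq d (Finset.mem_range.mp hd)).mp hdc)
      · exact fun hc' ↦ absurd (Finset.mem_range.mpr hc) hc'
  · refine hall fun k _ ↦ ?_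
    have hcop : (Nat.card (ZMod p)ˣ).Coprime q := ((hq.coprime_iff_not_dvd).mpr hqp).symm
    exact (powCoprime hcop).surjective (γ ^ k)

end PowerRoots

section Support

theorem orderOf_natCast_eq {x y : ℕ} (hx : 0 < x) (hy : 0 < y)
    (h : ∀ n : ℕ, 0 < n → ∀ p : ℕ, p.Prime → (p ∣ x ^ n - 1 ↔ p ∣ y ^ n - 1)) {p : ℕ}
    (hp : p.Prime) : orderOf (x : ZMod p) = orderOf (y : ZMod p) := by
  rw [orderOf_eq_orderOf_iff]
  intro n
  rcases n.eq_zero_or_pos with rfl | hn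
  · simp
  have key {w : ℕ} (hw : 0 < w) : p ∣ w ^ n - 1 ↔ (w : ZMod p) ^ n = 1 := by
    rw [← ZMod.natCast_eq_zero_iff, Nat.cast_sub (Nat.one_le_pow _ _ hw), sub_eq_zero]
    simp
  rw [← key hx, ← key hy]
  exact h n hn p hp

/-- If `x` and `y` have the same order modulo every prime, then for each prime `q` some product
`x * y ^ c` is a `q`-th power. -/
theorem exists_pow_eq_mul_pow {x y : ℕ} (hx : 0 < x) (hy : 0 < y)
    (h : ∀ p : ℕ, p.Prime → orderOf (x : ZMod p) = orderOf (y : ZMod p)) {q : ℕ} (hq : q.Prime) :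
    ∃ c z : ℕ, z ^ q = x * y ^ c := by
  by_contra! hne
  have hmx : HasMass (fun p ↦ powRootCount q x p) 1 :=
    hasMass_powRootCount hq fun z ↦ by simpa using hne 0 z
  have hleft := (hmx.const_mul ((q - 1 : ℕ) : ℝ)).add (hasMass_powRootCount_one hq)
  have hright := HasMass.sum (Finset.range q) fun c _ ↦ hasMass_powRootCount hq (hne c)
  have heq := hleft.congr (g' := fun p ↦ ∑ c ∈ Finset.range q,
      (powRootCount q (x * y ^ c) p : ℝ)) <| by
    refine ((x * y).primeFactors.finite_toSet.preimage
      Nat.Primes.coe_nat_injective.injOn).subset fun p hp ↦ ?_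
    by_contra hnd
    have : Fact p.1.Prime := ⟨p.2⟩
    have hxy : ¬ p.1 ∣ x * y := fun hdvd ↦
      hnd (Nat.mem_primeFactors.mpr ⟨p.2, hdvd, (Nat.mul_pos hx hy).ne'⟩)
    rw [p.2.dvd_mul, not_or, ← ZMod.natCast_eq_zero_iff, ← ZMod.natCast_eq_zero_iff] at hxy
    apply hp
    exact_mod_cast sum_powRootCount_mul_pow hq hxy.1 hxy.2 fun n _ ↦
      orderOf_eq_orderOf_iff.mp (h p p.2) n
  have := heq.unique hright
  rw [Nat.cast_sub hq.one_le] at this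
  simp only [Finset.sum_const, Finset.card_range, nsmul_eq_mul] at this
  norm_num at this
  linarith

theorem factorization_mul_factorization_eq {x y : ℕ} (hx : x ≠ 0) (hy : y ≠ 0)
    (h : ∀ q : ℕ, q.Prime → ∃ c z : ℕ, z ^ q = x * y ^ c) (l m : ℕ) :
    x.factorization l * y.factorization m = x.factorization m * y.factorization l := by
  zify
  rw [← sub_eq_zero]
  set D : ℤ := x.factorization l * y.factorization m - x.factorization m * y.factorization l
    with hD
  obtain ⟨q, hq, hqp⟩ := Nat.exists_infinite_primes (D.natAbs + 1)
  refine Int.eq_zero_of_abs_lt_dvd (m := q) ?_ (by rw [Int.abs_eq_natAbs]; omega)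
  obtain ⟨c, z, hz⟩ := h q hqp
  have key (k : ℕ) : (q : ℤ) ∣ x.factorization k + c * y.factorization k := by
    have := congrArg (fun n ↦ n.factorization k) hz
    simp only [Nat.factorization_mul hx (pow_ne_zero c hy), Nat.factorization_pow,
      Finsupp.add_apply, Finsupp.smul_apply, smul_eq_mul] at this
    exact ⟨z.factorization k, by exact_mod_cast this.symm⟩
  have heq : D = (x.factorization l + c * y.factorization l) * y.factorization m -
      (x.factorization m + c * y.factorization m) * y.factorization l := by
    rw [hD]
    ring
  rw [heq]
  exact dvd_sub ((key l).mul_right _) ((key m).mul_right _)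

theorem exists_coprime_pow_eq_pow {x y : ℕ} (hx : 1 < x) (hy : y ≠ 0)
    (hdvd : ∀ p : ℕ, p.Prime → p ∣ x → p ∣ y)
    (h : ∀ q : ℕ, q.Prime → ∃ c z : ℕ, z ^ q = x * y ^ c) :
    ∃ a b : ℕ, a ≠ 0 ∧ b ≠ 0 ∧ a.Coprime b ∧ x ^ b = y ^ a := by
  have hx0 : x ≠ 0 := by omega
  obtain ⟨m, hm, hmx⟩ := Nat.exists_prime_and_dvd hx.ne'
  set a := x.factorization m
  set b := y.factorization m
  have ha : 0 < a := hm.factorization_pos_of_dvd hx0 hmx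
  have hb : 0 < b := hm.factorization_pos_of_dvd hy (hdvd m hm hmx)
  have hpow : x ^ b = y ^ a := by
    refine Nat.eq_of_factorization_eq (pow_ne_zero b hx0) (pow_ne_zero a hy) fun l ↦ ?_
    simp only [Nat.factorization_pow, Finsupp.smul_apply, smul_eq_mul]
    rw [mul_comm]
    exact factorization_mul_factorization_eq hx0 hy h l m
  have hg : 0 < a.gcd b := Nat.gcd_pos_of_pos_left b ha
  refine ⟨a / a.gcd b, b / a.gcd b, ?_, ?_, Nat.coprime_div_gcd_div_gcd hg, ?_⟩
  · exact (Nat.div_pos (Nat.gcd_le_left b ha) hg).ne'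
  · exact (Nat.div_pos (Nat.gcd_le_right a hb) hg).ne'
  · apply Nat.pow_left_injective hg.ne'
    simp only [← pow_mul]
    rwa [Nat.div_mul_cancel (Nat.gcd_dvd_right a b), Nat.div_mul_cancel (Nat.gcd_dvd_left a b)]

/-- Every prime divides the order of `x` modulo some prime. -/
theorem exists_prime_dvd_orderOf_natCast {x r : ℕ} (hx : 1 < x) (hr : r.Prime) :
    ∃ p : ℕ, p.Prime ∧ 0 < orderOf (x : ZMod p) ∧ r ∣ orderOf (x : ZMod p) := by
  set k := Nat.totient (r ^ 2)
  have hk : k ≠ 0 := (Nat.totient_pos.mpr (pow_pos hr.pos 2)).ne'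
  set t := x ^ k
  have ht : 1 < t := Nat.one_lt_pow hk hx
  set N := ∑ i ∈ Finset.range r, t ^ i
  have hNr : r < N := by
    calc r = ∑ i ∈ Finset.range r, 1 := by simp
      _ < N := Finset.sum_lt_sum (fun i _ ↦ Nat.one_le_pow _ _ (by omega))
        ⟨1, Finset.mem_range.mpr hr.one_lt, by rwa [pow_one]⟩
  have hNsq : ¬ r ^ 2 ∣ N := by
    intro hdvd
    by_cases hrx : r ∣ x
    · have : Fact r.Prime := ⟨hr⟩
      have hrN := (dvd_pow_self r two_ne_zero).trans hdvd
      have hrt : (t : ZMod r) = 0 := (ZMod.natCast_eq_zero_iff t r).mpr (dvd_pow hrx hk)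
      rw [← ZMod.natCast_eq_zero_iff, Nat.cast_sum] at hrN
      simp only [Nat.cast_pow, hrt, zero_geom_sum, hr.ne_zero, if_false] at hrN
      exact one_ne_zero hrN
    · have hcop : x.Coprime (r ^ 2) := ((hr.coprime_iff_not_dvd).mpr hrx).symm.pow_right 2
      have ht1 : (t : ZMod (r ^ 2)) = 1 := by
        simpa [t] using (ZMod.natCast_eq_natCast_iff _ _ _).mpr (Nat.ModEq.pow_totient hcop)
      rw [← ZMod.natCast_eq_zero_iff, Nat.cast_sum] at hdvd
      simp only [Nat.cast_pow, ht1, one_pow, Finset.sum_const, Finset.card_range,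
        nsmul_one] at hdvd
      rw [ZMod.natCast_eq_zero_iff] at hdvd
      have := Nat.le_of_dvd hr.pos hdvd
      nlinarith [hr.one_lt]
  obtain ⟨p, hp, hpN, hpr⟩ : ∃ p : ℕ, p.Prime ∧ p ∣ N ∧ p ≠ r := by
    by_contra! hne
    have hN := Nat.eq_prime_pow_of_unique_prime_dvd (by omega) fun {d} hd hdN ↦ hne d hd hdN
    rw [hN] at hNr hNsq
    have : 1 < N.primeFactorsList.length :=
      (Nat.pow_lt_pow_iff_right hr.one_lt).mp (by rwa [pow_one])
    exact hNsq (pow_dvd_pow r this)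
  have : Fact p.Prime := ⟨hp⟩
  have : Fact r.Prime := ⟨hr⟩
  have hsum : ∑ i ∈ Finset.range r, (t : ZMod p) ^ i = 0 := by
    rw [← ZMod.natCast_eq_zero_iff] at hpN
    simpa [N] using hpN
  have hord : orderOf (t : ZMod p) = r := by
    refine orderOf_eq_prime ?_ fun h1 ↦ ?_
    · rw [← sub_eq_zero, ← geom_sum_mul, hsum, zero_mul]
    · rw [h1] at hsum
      simp only [one_pow, Finset.sum_const, Finset.card_range, nsmul_one] at hsum
      rw [ZMod.natCast_eq_zero_iff, Nat.prime_dvd_prime_iff_eq hp hr] at hsum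
      exact hpr hsum
  refine ⟨p, hp, ?_, ?_⟩
  · rw [orderOf_pos_iff]
    refine IsOfFinOrder.of_pow (n := k) ?_ hk
    rw [← orderOf_pos_iff]
    have := hord ▸ hr.pos
    simpa [t] using this
  · rw [← hord]
    simpa [t] using orderOf_pow_dvd (x := (x : ZMod p)) k

theorem eq_one_of_pow_eq_pow {x y a b : ℕ} (hx : 1 < x)
    (h : ∀ p : ℕ, p.Prime → orderOf (x : ZMod p) = orderOf (y : ZMod p)) (ha : a ≠ 0)
    (hb : b ≠ 0) (hab : a.Coprime b) (hxy : x ^ b = y ^ a) : b = 1 := by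
  by_contra hb1
  obtain ⟨r, hr, hrb⟩ := Nat.exists_prime_and_dvd hb1
  obtain ⟨p, hp, hpos, hrp⟩ := exists_prime_dvd_orderOf_natCast hx hr
  have hcast : (x : ZMod p) ^ b = (y : ZMod p) ^ a := by exact_mod_cast congrArg Nat.cast hxy
  have hord := congrArg orderOf hcast
  rw [orderOf_pow' _ hb, orderOf_pow' _ ha, ← h p hp] at hord
  set d := orderOf (x : ZMod p)
  have hgcd : d.gcd b = d.gcd a := by
    rw [← Nat.div_div_self (Nat.gcd_dvd_left d b) hpos.ne', hord,
      Nat.div_div_self (Nat.gcd_dvd_left d a) hpos.ne']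
  have hra : r ∣ a := (hgcd ▸ Nat.dvd_gcd hrp hrb).trans (Nat.gcd_dvd_right d a)
  exact hr.one_lt.ne' (Nat.dvd_one.mp (hab ▸ Nat.dvd_gcd hra hrb))

end Support

/-- The support problem for integers (Corrales-Rodrigáñez–Schoof, answering Erdős):
if `x` and `y` are positive integers such that for every `n ≥ 1` and every prime `p`,
`p ∣ x^n - 1` if and only if `p ∣ y^n - 1`, then `x = y`. -/
theorem support_problem_integers (x y : ℕ) (hx : 0 < x) (hy : 0 < y)
    (h : ∀ n : ℕ, 0 < n → ∀ p : ℕ, p.Prime → (p ∣ x ^ n - 1 ↔ p ∣ y ^ n - 1)) :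
    x = y := by
  have hord (p : ℕ) (hp : p.Prime) : orderOf (x : ZMod p) = orderOf (y : ZMod p) :=
    orderOf_natCast_eq hx hy h hp
  have hone {u v : ℕ} (hv : 0 < v)
      (huv : ∀ p : ℕ, p.Prime → orderOf (u : ZMod p) = orderOf (v : ZMod p)) (hu : u = 1) :
      v = 1 := by
    by_contra hv1
    obtain ⟨p, hp, -, hdvd⟩ := exists_prime_dvd_orderOf_natCast (by omega : 1 < v) Nat.prime_two
    rw [← huv p hp, hu, Nat.cast_one, orderOf_one] at hdvd
    exact absurd (Nat.dvd_one.mp hdvd) (by norm_num)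
  have hord' (p : ℕ) (hp : p.Prime) : orderOf (y : ZMod p) = orderOf (x : ZMod p) :=
    (hord p hp).symm
  by_cases hx1 : x = 1
  · rw [hx1, hone hy hord hx1]
  have hy1 : y ≠ 1 := fun hy1 ↦ hx1 (hone hx hord' hy1)
  have hdvd (p : ℕ) (hp : p.Prime) (hpx : p ∣ x) : p ∣ y := by
    have : Fact p.Prime := ⟨hp⟩
    by_contra hpy
    rw [← ZMod.natCast_eq_zero_iff] at hpx hpy
    have hpow := (orderOf_eq_orderOf_iff.mp (hord p hp) (p - 1)).mpr
      (ZMod.pow_card_sub_one_eq_one hpy)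
    rw [hpx, zero_pow (by have := hp.two_le; omega)] at hpow
    exact zero_ne_one hpow
  obtain ⟨a, b, ha, hb, hab, hpow⟩ := exists_coprime_pow_eq_pow (by omega) hy.ne' hdvd
    fun q hq ↦ exists_pow_eq_mul_pow hx hy hord hq
  have hb1 := eq_one_of_pow_eq_pow (by omega) hord ha hb hab hpow
  have ha1 := eq_one_of_pow_eq_pow (by omega) hord' hb ha hab.symm hpow.symm
  rwa [ha1, hb1, pow_one, pow_one] at hpow
end
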